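/- Let H > 0, r₀ > 0 and M ≥ 1. There exists R > 0, depending only on H, M and r₀, such that for every open set Ω ⊆ ℝ², every solution u of (CMC) on Ω, and every point P ∈ Ω with the closed disk of center P and radius r₀ contained in Ω and with W_u(P) ≤ M, one has W_u(Q) ≤ 2M for every Q with |Q − P| < R. -/

import Mathlib

open Real MeasureTheory Filter Set

noncomputable section

/-- Euclidean norm on `ℝ × ℝ`. -/
def enorm2 (p : ℝ × ℝ) : ℝ := Real.sqrt (p.1 ^ 2 + p.2 ^ 2)

/-- Partial derivative in the `x` direction. -/
def pdx (u : ℝ × ℝ → ℝ) (p : ℝ × ℝ) : ℝ := fderiv ℝ u p (1, 0)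

/-- Partial derivative in the `y` direction. -/
def pdy (u : ℝ × ℝ → ℝ) (p : ℝ × ℝ) : ℝ := fderiv ℝ u p (0, 1)

/-- The area element `W_u = √(1 + |∇u|²)`. -/
def Wgraph (u : ℝ × ℝ → ℝ) (p : ℝ × ℝ) : ℝ :=
  Real.sqrt (1 + (pdx u p) ^ 2 + (pdy u p) ^ 2)

/-- Upward unit normal of the graph of `u`. -/
def normalVec (u : ℝ × ℝ → ℝ) (p : ℝ × ℝ) : ℝ × ℝ × ℝ :=
  (-pdx u p / Wgraph u p, -pdy u p / Wgraph u p, 1 / Wgraph u p)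

/-- `u` is a (C²) solution of the constant mean curvature `H` equation on `Ω`. -/
def IsCMCSolution (H : ℝ) (Ω : Set (ℝ × ℝ)) (u : ℝ × ℝ → ℝ) : Prop :=
  ContDiffOn ℝ 2 u Ω ∧ ∀ p ∈ Ω,
    (1 + (pdy u p) ^ 2) * pdx (fun q => pdx u q) p
      - 2 * (pdx u p) * (pdy u p) * pdy (fun q => pdx u q) p
      + (1 + (pdx u p) ^ 2) * pdy (fun q => pdy u q) p
    = 2 * H * (1 + (pdx u p) ^ 2 + (pdy u p) ^ 2) ^ ((3 : ℝ) / 2)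

/-- `C` is a divergence line of the sequence `u` on `Ω`. -/
def IsDivergenceLine (H : ℝ) (Ω : Set (ℝ × ℝ)) (u : ℕ → ℝ × ℝ → ℝ)
    (C : Set (ℝ × ℝ)) : Prop :=
  ∃ z₁ : ℝ × ℝ, C ⊆ Ω ∧ (∀ q ∈ C, enorm2 (q - z₁) = 1 / (2 * H)) ∧
    IsConnected C ∧ C.Nontrivial ∧
    ∃ φ : ℕ → ℕ, StrictMono φ ∧ ∀ Q ∈ C,
      Tendsto (fun n => normalVec (u (φ n)) Q) atTop
        (nhds (2 * H * (z₁.1 - Q.1), 2 * H * (z₁.2 - Q.2), 0))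

open Topology

/-!
Because `u` solves the equation, the matrix field `(1 + 2Hu) I + W⁻¹ (I + ∇u ⊗ ∇u)` is the
differential of a map of the plane, a variant of Lewy's map. After `u` is normalized by `u P = 0`,
this map is, where `|2Hu| ≤ 1 / 2`, a local diffeomorphism whose differential is comparable with the
metric of the graph. Lifting rays through it parametrizes the graph near `P` by a disc whose radius
depends on `H` and `r₀` only.

In this parametrization the Gauss map `n` has energy density at most `C₁ - C₂ J`, where `J` is its
spherical Jacobian. As `n` takes values in the upper hemisphere, the area form pulled back by `n`
has a bounded primitive, and integrating it against a cutoff bounds the energy of `n`. By the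
Courant–Lebesgue argument `n` has small oscillation on some circle of the parameter disc.

Comparing `u` with its infinitesimal translates shows that `⟪a, n⟫ ≥ 0` on the boundary of a domain
implies `⟪a, n⟫ ≥ 0` inside. Hence the normals inside the circle lie in the convex cone generated
by the normals on the circle, and `n` has small oscillation on the whole disc. Since `1 / W` is the
vertical component of `n`, the gradient is controlled on this disc, and there the parametrization is
uniformly expanding over the plane, which gives back a disc around `P`.
-/

namespace CMC

/-! ### Jacobians and integration by parts -/

section CompactSupport

variable {E : Type*} [NormedAddCommGroup E] [NormedSpace ℝ E]

lemma exists_contDiff_cutoff [FiniteDimensional ℝ E] {K U : Set E} (hK : IsCompact K)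
    (hU : IsOpen U) (hKU : K ⊆ U) :
    ∃ χ : E → ℝ, ContDiff ℝ 1 χ ∧ HasCompactSupport χ ∧ tsupport χ ⊆ U ∧
      (∀ z ∈ K, χ z = 1) ∧ ∀ z, χ z ∈ Icc (0 : ℝ) 1 := by
  obtain ⟨K', hK', hKK', hK'U⟩ := exists_compact_between hK hU hKU
  obtain ⟨χ, hχ, hrange, hsupport, hone⟩ := exists_contMDiff_support_eq_eq_one_iff (n := 1)
    (modelWithCornersSelf ℝ E) (isOpen_interior (s := K')) hK.isClosed hKK'
  have htsupport : tsupport χ ⊆ K' :=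
    closure_minimal (hsupport.trans_subset interior_subset) hK'.isClosed
  exact ⟨χ, hχ.contDiff, hK'.of_isClosed_subset (isClosed_tsupport χ) htsupport,
    htsupport.trans hK'U, fun z hz => (hone z).1 hz, fun z => hrange (mem_range_self z)⟩

lemma contDiff_smul_of_tsupport_subset {F : Type*} [NormedAddCommGroup F] [NormedSpace ℝ F]
    {U : Set E} (hU : IsOpen U) {φ : E → ℝ} {g : E → F} (hφ : ContDiff ℝ 1 φ)
    (hφU : tsupport φ ⊆ U) (hg : ContDiffOn ℝ 1 g U) : ContDiff ℝ 1 fun z => φ z • g z := by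
  refine contDiff_iff_contDiffAt.2 fun z => ?_
  by_cases hz : z ∈ tsupport φ
  · exact hφ.contDiffAt.smul (hg.contDiffAt (hU.mem_nhds (hφU hz)))
  · refine contDiffAt_const (c := (0 : F)) |>.congr_of_eventuallyEq ?_
    filter_upwards [notMem_tsupport_iff_eventuallyEq.1 hz] with w hw
    simp [hw]

variable [MeasurableSpace E] [BorelSpace E] {μ : Measure E} {F g : E → ℝ}

lemma integrable_fderiv_mul_fderiv [IsFiniteMeasureOnCompacts μ] {U : Set E} (hU : IsOpen U)
    (hF : ContDiff ℝ 1 F) (hFc : HasCompactSupport F) (hFU : tsupport F ⊆ U)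
    (hg : ContDiffOn ℝ 1 g U) (v w : E) :
    Integrable (fun z => fderiv ℝ F z v * fderiv ℝ g z w) μ := by
  have hzero : ∀ z ∉ tsupport F, fderiv ℝ F z v * fderiv ℝ g z w = 0 := fun z hz => by
    simp [fderiv_of_notMem_tsupport ℝ hz]
  refine Continuous.integrable_of_hasCompactSupport ?_ (HasCompactSupport.intro hFc hzero)
  refine ContinuousOn.continuous_of_tsupport_subset ?_ hU (closure_minimal ?_ (isClosed_tsupport F)
    |>.trans hFU)
  · exact ((hF.continuous_fderiv one_ne_zero).clm_apply continuous_const).continuousOn.mul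
      ((hg.continuousOn_fderiv_of_isOpen hU le_rfl).clm_apply continuousOn_const)
  · exact fun z hz => not_imp_comm.1 (hzero z) hz

/-- No second derivatives of `F` and `g` are available. Instead, the convolution of `F` with the
reflection of `g` is `C²`, and both sides are, up to sign, its mixed derivatives at the origin. -/
lemma integral_fderiv_mul_fderiv_comm [FiniteDimensional ℝ E] [μ.IsAddHaarMeasure]
    (hF : ContDiff ℝ 1 F) (hg : ContDiff ℝ 1 g) (hFc : HasCompactSupport F)
    (hgc : HasCompactSupport g) (v w : E) :
    ∫ z, fderiv ℝ F z v * fderiv ℝ g z w ∂μ = ∫ z, fderiv ℝ F z w * fderiv ℝ g z v ∂μ := by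
  set b : E → ℝ := fun z => g (-z) with hb
  have hbC : ContDiff ℝ 1 b := hg.comp contDiff_neg
  have hbc : HasCompactSupport b := hgc.comp_homeomorph (Homeomorph.neg _)
  have hDF : Continuous (fderiv ℝ F) := hF.continuous_fderiv one_ne_zero
  have hDb : Continuous (fderiv ℝ b) := hbC.continuous_fderiv one_ne_zero
  have hfderiv := fun y => hbc.hasFDerivAt_convolution_right (μ := μ)
    (ContinuousLinearMap.mul ℝ ℝ) hF.continuous.locallyIntegrable hbC y
  have hfderiv₂ := hFc.hasFDerivAt_convolution_left (μ := μ)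
    ((ContinuousLinearMap.mul ℝ ℝ).precompR E) hF hDb.locallyIntegrable 0
  have hsymm := second_derivative_symmetric hfderiv hfderiv₂ v w
  have hint := (hFc.fderiv ℝ).convolutionExists_left (𝕜 := ℝ) (μ := μ) (F := E →L[ℝ] E →L[ℝ] ℝ)
    (((ContinuousLinearMap.mul ℝ ℝ).precompR E).precompL E) hDF hDb.locallyIntegrable 0
  have hDb_neg : ∀ t, fderiv ℝ b (0 - t) = -fderiv ℝ g t := fun t => by
    simpa [hb] using fderiv_comp_smul (f := g) (x := -t) (-1 : ℝ)
  have hsecond : ∀ v w : E, convolution (𝕜 := ℝ) (F := E →L[ℝ] E →L[ℝ] ℝ) (fderiv ℝ F) (fderiv ℝ b)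
      (((ContinuousLinearMap.mul ℝ ℝ).precompR E).precompL E) μ 0 v w =
      -∫ t, fderiv ℝ F t v * fderiv ℝ g t w ∂μ := fun v w => by
    rw [convolution_def, ContinuousLinearMap.integral_apply hint.integrable,
      ContinuousLinearMap.integral_apply (hint.integrable.apply_continuousLinearMap v),
      ← integral_neg]
    refine integral_congr_ae (Eventually.of_forall fun t => ?_)
    simp only [hDb_neg]
    simp [ContinuousLinearMap.precompR]
  rwa [hsecond, hsecond, neg_inj] at hsymm

lemma integral_fderiv_mul_fderiv_comm_of_tsupport_subset [FiniteDimensional ℝ E]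
    [μ.IsAddHaarMeasure] {U : Set E} (hU : IsOpen U) (hF : ContDiff ℝ 1 F)
    (hFc : HasCompactSupport F) (hFU : tsupport F ⊆ U) (hg : ContDiffOn ℝ 1 g U) (v w : E) :
    ∫ z, fderiv ℝ F z v * fderiv ℝ g z w ∂μ = ∫ z, fderiv ℝ F z w * fderiv ℝ g z v ∂μ := by
  obtain ⟨K, hK, hFK, hKU⟩ := exists_compact_between hFc hU hFU
  obtain ⟨χ, hχ, hχc, hχU, hχK, -⟩ := exists_contDiff_cutoff hK hU hKU
  have hcongr : ∀ v w : E, (fun z => fderiv ℝ F z v * fderiv ℝ g z w) =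
      fun z => fderiv ℝ F z v * fderiv ℝ (fun z => χ z * g z) z w := fun v w => by
    ext z
    by_cases hz : z ∈ tsupport F
    · have heq : (fun z => χ z * g z) =ᶠ[𝓝 z] g := by
        filter_upwards [isOpen_interior.mem_nhds (hFK hz)] with y hy
        rw [hχK y (interior_subset hy), one_mul]
      rw [heq.fderiv_eq]
    · simp [fderiv_of_notMem_tsupport ℝ hz]
  rw [hcongr v w, hcongr w v]
  exact integral_fderiv_mul_fderiv_comm hF (contDiff_smul_of_tsupport_subset hU hχ hχU hg) hFc
    hχc.mul_right v w

end CompactSupport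

/-- The Jacobian determinant `∂(f, g) / ∂(x, y)` of two functions on the plane. -/
def jacobian (f g : ℝ × ℝ → ℝ) (z : ℝ × ℝ) : ℝ := pdx f z * pdy g z - pdy f z * pdx g z

lemma jacobian_mul_left {f g h : ℝ × ℝ → ℝ} {z : ℝ × ℝ} (hf : DifferentiableAt ℝ f z)
    (hg : DifferentiableAt ℝ g z) :
    jacobian (fun w => f w * g w) h z = f z * jacobian g h z + g z * jacobian f h z := by
  simp only [jacobian, pdx, pdy, fderiv_fun_mul hf hg, add_apply, smul_apply, smul_eq_mul]
  ring

section Jacobian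

variable {U : Set (ℝ × ℝ)} {φ g : ℝ × ℝ → ℝ}

lemma integrable_jacobian (hU : IsOpen U) (hφ : ContDiff ℝ 1 φ) (hφc : HasCompactSupport φ)
    (hφU : tsupport φ ⊆ U) (hg : ContDiffOn ℝ 1 g U) : Integrable (jacobian φ g) :=
  (integrable_fderiv_mul_fderiv hU hφ hφc hφU hg (1, 0) (0, 1)).sub
    (integrable_fderiv_mul_fderiv hU hφ hφc hφU hg (0, 1) (1, 0))

lemma integral_jacobian_eq_zero (hU : IsOpen U) (hφ : ContDiff ℝ 1 φ) (hφc : HasCompactSupport φ)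
    (hφU : tsupport φ ⊆ U) (hg : ContDiffOn ℝ 1 g U) : ∫ z, jacobian φ g z = 0 := by
  unfold jacobian pdx pdy
  rw [integral_sub (integrable_fderiv_mul_fderiv hU hφ hφc hφU hg (1, 0) (0, 1))
    (integrable_fderiv_mul_fderiv hU hφ hφc hφU hg (0, 1) (1, 0)),
    integral_fderiv_mul_fderiv_comm_of_tsupport_subset hU hφ hφc hφU hg, sub_self]

end Jacobian

/-! ### Energy of maps into the hemisphere -/

/-- The Dirichlet energy density `‖∂ₓ n‖² + ‖∂ᵧ n‖²` of a map defined on the plane. -/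
def energyDensity {E : Type*} [NormedAddCommGroup E] [NormedSpace ℝ E] (n : ℝ × ℝ → E)
    (z : ℝ × ℝ) : ℝ :=
  ‖fderiv ℝ n z (1, 0)‖ ^ 2 + ‖fderiv ℝ n z (0, 1)‖ ^ 2

/-- The Jacobian, with respect to the area of the sphere, of a map `n` into the upper half of the
unit sphere of `ℝ³`: the projection to the horizontal plane scales the area at `n` by `n₃`. -/
def sphericalJacobian (n : ℝ × ℝ → EuclideanSpace ℝ (Fin 3)) (z : ℝ × ℝ) : ℝ :=
  jacobian (fun w => n w 0) (fun w => n w 1) z / n z 2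

lemma apply_eq_smul_add_smul {E : Type*} [NormedAddCommGroup E] [NormedSpace ℝ E]
    (L : ℝ × ℝ →L[ℝ] E) (v : ℝ × ℝ) : L v = v.1 • L (1, 0) + v.2 • L (0, 1) := by
  rw [← map_smul, ← map_smul, ← map_add]
  simp

lemma inner_fderiv_eq_zero_of_norm_eq_one {E F : Type*} [NormedAddCommGroup E] [NormedSpace ℝ E]
    [NormedAddCommGroup F] [InnerProductSpace ℝ F] {n : E → F} {z : E}
    (hd : DifferentiableAt ℝ n z) (hn : ∀ᶠ w in 𝓝 z, ‖n w‖ = 1) (v : E) :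
    inner ℝ (n z) (fderiv ℝ n z v) = 0 := by
  have hconst : (fun w => ‖n w‖ ^ 2) =ᶠ[𝓝 z] fun _ => 1 := by
    filter_upwards [hn] with w hw
    rw [hw, one_pow]
  have := congrArg (· v) (hd.hasFDerivAt.norm_sq.unique
    ((hasFDerivAt_const (1 : ℝ) z).congr_of_eventuallyEq hconst))
  simpa using this

lemma fderiv_component {E ι : Type*} [NormedAddCommGroup E] [NormedSpace ℝ E] [Finite ι]
    {n : E → EuclideanSpace ℝ ι} {z : E} (hd : DifferentiableAt ℝ n z) (i : ι) (v : E) :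
    fderiv ℝ (fun w => n w i) z v = fderiv ℝ n z v i := by
  have := Fintype.ofFinite ι
  have hcomp : HasFDerivAt (fun w => n w i) _ z :=
    (EuclideanSpace.proj (𝕜 := ℝ) i).hasFDerivAt.comp z hd.hasFDerivAt
  rw [hcomp.fderiv]
  rfl

section Hemisphere

variable {n : ℝ × ℝ → EuclideanSpace ℝ (Fin 3)} {z : ℝ × ℝ}

lemma sum_sq_eq_one_of_norm_eq_one {v : EuclideanSpace ℝ (Fin 3)} (hv : ‖v‖ = 1) :
    v 0 ^ 2 + v 1 ^ 2 + v 2 ^ 2 = 1 := by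
  rw [← Fin.sum_univ_three (fun i => v i ^ 2), ← EuclideanSpace.real_norm_sq_eq, hv, one_pow]

lemma jacobian_third_component (hd : DifferentiableAt ℝ n z) (hn : ∀ᶠ w in 𝓝 z, ‖n w‖ = 1)
    (hpos : 0 < n z 2) :
    jacobian (fun w => n w 2) (fun w => n w 1) z = -n z 0 * sphericalJacobian n z ∧
      jacobian (fun w => n w 2) (fun w => n w 0) z = n z 1 * sphericalJacobian n z := by
  have hx := inner_fderiv_eq_zero_of_norm_eq_one hd hn (1, 0)
  have hy := inner_fderiv_eq_zero_of_norm_eq_one hd hn (0, 1)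
  simp only [PiLp.inner_apply, RCLike.inner_apply, conj_trivial, Fin.sum_univ_three] at hx hy
  simp only [sphericalJacobian, jacobian, pdx, pdy, fderiv_component hd]
  constructor <;> field_simp
  · linear_combination fderiv ℝ n z (0, 1) 1 * hx - fderiv ℝ n z (1, 0) 1 * hy
  · linear_combination fderiv ℝ n z (0, 1) 0 * hx - fderiv ℝ n z (1, 0) 0 * hy

lemma differentiableAt_component (hd : DifferentiableAt ℝ n z) (i : Fin 3) :
    DifferentiableAt ℝ (fun w => n w i) z :=
  (EuclideanSpace.proj (𝕜 := ℝ) i).differentiableAt.comp z hd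

lemma differentiableAt_stereographic (hd : DifferentiableAt ℝ n z) (hpos : 0 < n z 2) (i : Fin 3) :
    DifferentiableAt ℝ (fun w => n w i / (1 + n w 2)) z := by
  simp only [div_eq_mul_inv]
  exact (differentiableAt_component hd i).fun_mul
    (((differentiableAt_component hd 2).const_add 1).fun_inv (by positivity))

/-- The bounded form `(n₁ dn₂ - n₂ dn₁) / (1 + n₃)` is a primitive of the area form of the
hemisphere. -/
lemma jacobian_stereographic_sub (hd : DifferentiableAt ℝ n z) (hn : ∀ᶠ w in 𝓝 z, ‖n w‖ = 1)
    (hpos : 0 < n z 2) :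
    jacobian (fun w => n w 0 / (1 + n w 2)) (fun w => n w 1) z -
      jacobian (fun w => n w 1 / (1 + n w 2)) (fun w => n w 0) z = sphericalJacobian n z := by
  have hne : 1 + n z 2 ≠ 0 := by positivity
  have hden : DifferentiableAt ℝ (fun w => 1 + n w 2) z :=
    (differentiableAt_component hd 2).const_add 1
  have hnum : ∀ i j, jacobian (fun w => n w i) (fun w => n w j) z =
      n z i / (1 + n z 2) * jacobian (fun w => n w 2) (fun w => n w j) z +
        (1 + n z 2) * jacobian (fun w => n w i / (1 + n w 2)) (fun w => n w j) z := fun i j => by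
    have heq : (fun w => n w i) =ᶠ[𝓝 z] fun w => n w i / (1 + n w 2) * (1 + n w 2) := by
      filter_upwards [hden.continuousAt.eventually_ne hne] with w hw
      rw [div_mul_cancel₀ _ hw]
    have hmul := jacobian_mul_left (h := fun w => n w j)
      (differentiableAt_stereographic hd hpos i) hden
    simp only [jacobian, pdx, pdy, heq.fderiv_eq, fderiv_const_add] at hmul ⊢
    exact hmul
  have hanti : jacobian (fun w => n w 1) (fun w => n w 0) z =
      -jacobian (fun w => n w 0) (fun w => n w 1) z := by unfold jacobian; ring
  have hdef : jacobian (fun w => n w 0) (fun w => n w 1) z = n z 2 * sphericalJacobian n z := by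
    unfold sphericalJacobian; field_simp
  obtain ⟨h21, h20⟩ := jacobian_third_component hd hn hpos
  have h01 := hnum 0 1
  have h10 := hnum 1 0
  rw [hdef, h21] at h01
  rw [hanti, hdef, h20] at h10
  have hsq := sum_sq_eq_one_of_norm_eq_one hn.self_of_nhds
  field_simp at h01 h10
  apply mul_left_cancel₀ (pow_ne_zero 2 hne)
  linear_combination h10 - h01 + sphericalJacobian n z * hsq

/-- The cross terms arising from the integration by parts against `η²` are absorbed into the
energy. -/
lemma two_mul_cross_term_le {a b : ℝ} (hab : a ^ 2 + b ^ 2 ≤ 1) (hd : DifferentiableAt ℝ n z)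
    (η : ℝ × ℝ → ℝ) (C : ℝ) :
    -(2 * C * η z * (a * jacobian η (fun w => n w 1) z - b * jacobian η (fun w => n w 0) z)) ≤
      η z ^ 2 * energyDensity n z / 2 + 2 * C ^ 2 * (pdx η z ^ 2 + pdy η z ^ 2) := by
  set T := a * jacobian η (fun w => n w 1) z - b * jacobian η (fun w => n w 0) z with hT
  set G := pdx η z ^ 2 + pdy η z ^ 2
  have hG0 : 0 ≤ G := by positivity
  have hE0 : 0 ≤ energyDensity n z := by unfold energyDensity; positivity
  have hTle : T ^ 2 ≤ G * energyDensity n z := by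
    simp only [energyDensity, EuclideanSpace.real_norm_sq_eq, Fin.sum_univ_three]
    set x := fderiv ℝ n z (1, 0)
    set y := fderiv ℝ n z (0, 1)
    have hT' : T = pdx η z * (a * y 1 - b * y 0) + pdy η z * (b * x 0 - a * x 1) := by
      simp only [hT, jacobian, pdx, pdy, fderiv_component hd]
      ring
    have cauchy_schwarz : ∀ s t u v : ℝ, (s * u + t * v) ^ 2 ≤ (s ^ 2 + t ^ 2) * (u ^ 2 + v ^ 2) :=
      fun s t u v => by linarith [sq_nonneg (s * v - t * u)]
    have hbound : ∀ u v : ℝ, (a * v - b * u) ^ 2 ≤ u ^ 2 + v ^ 2 := fun u v => by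
      nlinarith [cauchy_schwarz a (-b) v u, sq_nonneg u, sq_nonneg v]
    calc T ^ 2 ≤ G * ((a * y 1 - b * y 0) ^ 2 + (b * x 0 - a * x 1) ^ 2) := by
          rw [hT']; exact cauchy_schwarz _ _ _ _
      _ ≤ G * (x 0 ^ 2 + x 1 ^ 2 + x 2 ^ 2 + (y 0 ^ 2 + y 1 ^ 2 + y 2 ^ 2)) := by
          refine mul_le_mul_of_nonneg_left ?_ hG0
          linarith [hbound (y 0) (y 1), hbound (x 0) (x 1), sq_nonneg (x 2), sq_nonneg (y 2)]
  refine (neg_le_abs _).trans (abs_le_of_sq_le_sq ?_ (by positivity))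
  calc (2 * C * η z * T) ^ 2 = 4 * C ^ 2 * η z ^ 2 * T ^ 2 := by ring
    _ ≤ 4 * C ^ 2 * η z ^ 2 * (G * energyDensity n z) := by gcongr
    _ ≤ (η z ^ 2 * energyDensity n z / 2 + 2 * C ^ 2 * G) ^ 2 := by
        linarith [sq_nonneg (η z ^ 2 * energyDensity n z / 2 - 2 * C ^ 2 * G)]

/-- The Jacobian of the cutoff primitive of the area form; its integral vanishes. -/
def cutoffJacobian (η : ℝ × ℝ → ℝ) (n : ℝ × ℝ → EuclideanSpace ℝ (Fin 3)) (z : ℝ × ℝ) : ℝ :=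
  jacobian (fun w => η w * (η w * (n w 0 / (1 + n w 2)))) (fun w => n w 1) z -
    jacobian (fun w => η w * (η w * (n w 1 / (1 + n w 2)))) (fun w => n w 0) z

lemma sq_mul_energyDensity_le {η : ℝ × ℝ → ℝ} {C₁ C₂ : ℝ} (hη : DifferentiableAt ℝ η z)
    (hd : DifferentiableAt ℝ n z) (hn : ∀ᶠ w in 𝓝 z, ‖n w‖ = 1) (hpos : 0 < n z 2)
    (hE : energyDensity n z ≤ C₁ - C₂ * sphericalJacobian n z) :
    η z ^ 2 * energyDensity n z ≤
      2 * (C₁ * η z ^ 2 + 2 * C₂ ^ 2 * (pdx η z ^ 2 + pdy η z ^ 2)) -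
        2 * C₂ * cutoffJacobian η n z := by
  have hquot := differentiableAt_stereographic hd hpos
  have hab : (n z 0 / (1 + n z 2)) ^ 2 + (n z 1 / (1 + n z 2)) ^ 2 ≤ 1 := by
    rw [div_pow, div_pow, ← add_div, div_le_one (by positivity)]
    nlinarith [sum_sq_eq_one_of_norm_eq_one hn.self_of_nhds]
  have hcross := two_mul_cross_term_le hab hd η (-C₂)
  have hprimitive := jacobian_stereographic_sub hd hn hpos
  have hle := mul_le_mul_of_nonneg_left hE (sq_nonneg (η z))
  have hcutoff : ∀ i (h : ℝ × ℝ → ℝ),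
      jacobian (fun w => η w * (η w * (n w i / (1 + n w 2)))) h z =
        η z ^ 2 * jacobian (fun w => n w i / (1 + n w 2)) h z +
          2 * η z * (n z i / (1 + n z 2) * jacobian η h z) := fun i h => by
    rw [jacobian_mul_left (g := fun w => η w * (n w i / (1 + n w 2))) hη (hη.fun_mul (hquot i)),
      jacobian_mul_left (g := fun w => n w i / (1 + n w 2)) hη (hquot i)]
    ring
  rw [cutoffJacobian, hcutoff, hcutoff]
  rw [← hprimitive] at hle
  linarith

end Hemisphere

section CutoffEnergy

variable {U : Set (ℝ × ℝ)} {n : ℝ × ℝ → EuclideanSpace ℝ (Fin 3)} {η : ℝ × ℝ → ℝ}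

lemma integrable_and_integral_cutoffJacobian_eq_zero (hU : IsOpen U) (hd : ContDiffOn ℝ 1 n U)
    (hpos : ∀ z ∈ U, 0 < n z 2) (hη : ContDiff ℝ 1 η) (hηc : HasCompactSupport η)
    (hηU : tsupport η ⊆ U) :
    Integrable (cutoffJacobian η n) ∧ ∫ z, cutoffJacobian η n z = 0 := by
  have hcomp : ∀ i, ContDiffOn ℝ 1 (fun w => n w i) U := contDiffOn_euclidean.1 hd
  have hquot : ∀ i, ContDiffOn ℝ 1 (fun w => n w i / (1 + n w 2)) U := fun i =>
    (hcomp i).div (contDiffOn_const.add (hcomp 2)) fun z hz => by have := hpos z hz; positivity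
  have hcutoff : ∀ i, ContDiff ℝ 1 (fun w => η w * (η w * (n w i / (1 + n w 2)))) := fun i =>
    contDiff_smul_of_tsupport_subset hU hη hηU (hη.contDiffOn.mul (hquot i))
  have hsub : ∀ i, tsupport (fun w => η w * (η w * (n w i / (1 + n w 2)))) ⊆ U :=
    fun i => tsupport_mul_subset_left.trans hηU
  have hint : ∀ i j, Integrable
      (jacobian (fun w => η w * (η w * (n w i / (1 + n w 2)))) (fun w => n w j)) :=
    fun i j => integrable_jacobian hU (hcutoff i) hηc.mul_right (hsub i) (hcomp j)
  refine ⟨(hint 0 1).sub (hint 1 0), ?_⟩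
  unfold cutoffJacobian
  rw [integral_sub (hint 0 1) (hint 1 0),
    integral_jacobian_eq_zero hU (hcutoff 0) hηc.mul_right (hsub 0) (hcomp 1),
    integral_jacobian_eq_zero hU (hcutoff 1) hηc.mul_right (hsub 1) (hcomp 0), sub_zero]

lemma cutoffJacobian_of_notMem_tsupport {z : ℝ × ℝ} (hz : z ∉ tsupport η) :
    cutoffJacobian η n z = 0 := by
  have hzero : ∀ i, fderiv ℝ (fun w => η w * (η w * (n w i / (1 + n w 2)))) z = 0 :=
    fun i => fderiv_of_notMem_tsupport ℝ fun h => hz (tsupport_mul_subset_left h)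
  simp [cutoffJacobian, jacobian, pdx, pdy, hzero]

lemma integral_sq_mul_energyDensity_le {C₁ C₂ : ℝ} (hU : IsOpen U) (hd : ContDiffOn ℝ 1 n U)
    (hn : ∀ z ∈ U, ‖n z‖ = 1) (hpos : ∀ z ∈ U, 0 < n z 2)
    (hE : ∀ z ∈ U, energyDensity n z ≤ C₁ - C₂ * sphericalJacobian n z)
    (hη : ContDiff ℝ 1 η) (hηc : HasCompactSupport η) (hηU : tsupport η ⊆ U) :
    ∫ z, η z ^ 2 * energyDensity n z ≤
      ∫ z, 2 * (C₁ * η z ^ 2 + 2 * C₂ ^ 2 * (pdx η z ^ 2 + pdy η z ^ 2)) := by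
  set R : ℝ × ℝ → ℝ := fun z => 2 * (C₁ * η z ^ 2 + 2 * C₂ ^ 2 * (pdx η z ^ 2 + pdy η z ^ 2))
    with hR
  obtain ⟨hJ, hJ0⟩ := integrable_and_integral_cutoffJacobian_eq_zero hU hd hpos hη hηc hηU
  have hRint : Integrable R := by
    have hpd : ∀ v, Continuous fun z => fderiv ℝ η z v :=
      fun v => (hη.continuous_fderiv one_ne_zero).clm_apply continuous_const
    refine Continuous.integrable_of_hasCompactSupport ?_
      (HasCompactSupport.intro hηc fun z hz => ?_)
    · exact continuous_const.mul ((continuous_const.mul (hη.continuous.pow 2)).add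
        (continuous_const.mul (((hpd (1, 0)).pow 2).add ((hpd (0, 1)).pow 2))))
    · simp [hR, pdx, pdy, image_eq_zero_of_notMem_tsupport hz, fderiv_of_notMem_tsupport ℝ hz]
  have hle : ∀ z, η z ^ 2 * energyDensity n z ≤ R z - 2 * C₂ * cutoffJacobian η n z := by
    intro z
    by_cases hz : z ∈ tsupport η
    · have hUz := hU.mem_nhds (hηU hz)
      exact sq_mul_energyDensity_le (hη.differentiable one_ne_zero z)
        ((hd.contDiffAt hUz).differentiableAt one_ne_zero) (eventually_of_mem hUz hn)
        (hpos z (hηU hz)) (hE z (hηU hz))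
    · simp [hR, pdx, pdy, cutoffJacobian_of_notMem_tsupport hz, image_eq_zero_of_notMem_tsupport hz,
        fderiv_of_notMem_tsupport ℝ hz]
  calc ∫ z, η z ^ 2 * energyDensity n z
      ≤ ∫ z, (R z - 2 * C₂ * cutoffJacobian η n z) := by
        refine integral_mono_of_nonneg (Eventually.of_forall fun z => ?_)
          (hRint.sub (hJ.const_mul _)) (Eventually.of_forall hle)
        simp only [energyDensity, Pi.zero_apply]
        positivity
    _ = ∫ z, R z := by
        rw [integral_sub hRint (hJ.const_mul _), integral_const_mul (2 * C₂), hJ0, mul_zero,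
          sub_zero]

end CutoffEnergy

/-! ### The Courant–Lebesgue lemma -/

section Circle

lemma intervalIntegral_polar_le_integral {f : ℝ × ℝ → ℝ} (hf : Continuous f) (hi : Integrable f)
    (h0 : ∀ z, 0 ≤ f z) {δ τ : ℝ} (hδ : 0 < δ) (hδτ : δ ≤ τ) :
    ∫ t in δ..τ, ∫ θ in (-π)..π, t * f (t * cos θ, t * sin θ) ≤ ∫ z, f z := by
  set g : ℝ × ℝ → ℝ := fun p => p.1 * f (p.1 * cos p.2, p.1 * sin p.2) with hg
  set B : Set (ℝ × ℝ) := Ioc δ τ ×ˢ Ioo (-π) π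
  have hBm : MeasurableSet B := measurableSet_Ioc.prod measurableSet_Ioo
  have hgB : IntegrableOn g B :=
    (Continuous.continuousOn (by fun_prop)).integrableOn_compact
      (isCompact_Icc.prod isCompact_Icc : IsCompact (Icc δ τ ×ˢ Icc (-π) π))
      |>.mono_set (prod_mono Ioc_subset_Icc_self Ioo_subset_Icc_self)
  have hg0 : ∀ p ∈ B, 0 ≤ g p := fun p hp => mul_nonneg (hδ.le.trans hp.1.1.le) (h0 _)
  have hfubini : ∫ t in δ..τ, ∫ θ in (-π)..π, g (t, θ) = ∫ p in B, g p := by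
    rw [Measure.volume_eq_prod] at hgB ⊢
    rw [setIntegral_prod g hgB, intervalIntegral.integral_of_le hδτ]
    simp only [intervalIntegral.integral_of_le (show -π ≤ π by linarith [pi_pos]),
      integral_Ioc_eq_integral_Ioo]
  rw [hfubini, ← ENNReal.ofReal_le_ofReal_iff (integral_nonneg h0),
    ofReal_integral_eq_lintegral_ofReal hi (Eventually.of_forall h0),
    ofReal_integral_eq_lintegral_ofReal hgB ((ae_restrict_iff' hBm).2 (Eventually.of_forall hg0)),
    ← lintegral_comp_polarCoord_symm]
  have hsub : B ⊆ polarCoord.target := by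
    rw [polarCoord_target]
    exact prod_mono (fun t ht => hδ.trans ht.1) subset_rfl
  refine le_trans (setLIntegral_congr_fun hBm fun p hp => ?_).le (lintegral_mono_set hsub)
  simp only [hg, polarCoord_symm_apply, smul_eq_mul]
  rw [ENNReal.ofReal_mul (hδ.le.trans hp.1.1.le)]

lemma exists_circle_integral_le {f : ℝ × ℝ → ℝ} (hf : Continuous f) (hi : Integrable f)
    (h0 : ∀ z, 0 ≤ f z) {δ τ m : ℝ} (hδ : 0 < δ) (hδτ : δ ≤ τ)
    (hE : ∫ z, f z < m * log (τ / δ)) :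
    ∃ t ∈ Icc δ τ, ∫ θ in (-π)..π, t ^ 2 * f (t * cos θ, t * sin θ) ≤ m := by
  by_contra! hlarge
  refine hE.not_ge ?_
  calc m * log (τ / δ) = ∫ t in δ..τ, m * t⁻¹ := by
        rw [intervalIntegral.integral_const_mul, integral_inv_of_pos hδ (hδ.trans_le hδτ)]
    _ ≤ ∫ t in δ..τ, ∫ θ in (-π)..π, t * f (t * cos θ, t * sin θ) := by
        refine intervalIntegral.integral_mono_on hδτ ?_ ?_ fun t ht => ?_
        · refine ContinuousOn.intervalIntegrable ?_
          rw [uIcc_of_le hδτ]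
          exact continuousOn_const.mul
            (continuousOn_inv₀.mono fun t ht => (hδ.trans_le ht.1).ne')
        · refine Continuous.intervalIntegrable ?_ _ _
          exact intervalIntegral.continuous_parametric_intervalIntegral_of_continuous'
            (by fun_prop) _ _
        · have ht0 : 0 < t := hδ.trans_le ht.1
          rw [← div_eq_mul_inv, div_le_iff₀ ht0, ← intervalIntegral.integral_mul_const]
          refine (hlarge t ht).le.trans_eq ?_
          congr 1 with θ
          ring
    _ ≤ ∫ z, f z := intervalIntegral_polar_le_integral hf hi h0 hδ hδτ

lemma norm_sub_sq_le_mul_integral {E : Type*} [NormedAddCommGroup E] [NormedSpace ℝ E]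
    [CompleteSpace E] {h h' : ℝ → E} (hd : ∀ θ, HasDerivAt h (h' θ) θ) (hc : Continuous h')
    {a b θ : ℝ} (hθ : θ ∈ Icc a b) :
    ‖h θ - h a‖ ^ 2 ≤ (b - a) * ∫ x in a..b, ‖h' x‖ ^ 2 := by
  have hab : a ≤ b := hθ.1.trans hθ.2
  set I := ∫ x in a..b, ‖h' x‖
  have hle : ‖h θ - h a‖ ≤ I := by
    rw [← intervalIntegral.integral_eq_sub_of_hasDerivAt (fun x _ => hd x)
      (hc.intervalIntegrable _ _)]
    exact (intervalIntegral.norm_integral_le_integral_norm hθ.1).trans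
      (intervalIntegral.integral_mono_interval le_rfl hθ.1 hθ.2
        (Eventually.of_forall fun x => norm_nonneg _) (hc.norm.intervalIntegrable _ _))
  have hquad : ∀ c : ℝ, 0 ≤ (∫ x in a..b, ‖h' x‖ ^ 2) - 2 * c * I + (b - a) * c ^ 2 := fun c => by
    calc 0 ≤ ∫ x in a..b, (‖h' x‖ - c) ^ 2 :=
          intervalIntegral.integral_nonneg hab fun x _ => sq_nonneg _
      _ = ∫ x in a..b, (‖h' x‖ ^ 2 - 2 * c * ‖h' x‖ + c ^ 2) := by
          congr 1 with x
          ring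
      _ = _ := by
          rw [intervalIntegral.integral_add (Continuous.intervalIntegrable (by fun_prop) _ _)
            (Continuous.intervalIntegrable (by fun_prop) _ _), intervalIntegral.integral_sub
            (Continuous.intervalIntegrable (by fun_prop) _ _)
            (Continuous.intervalIntegrable (by fun_prop) _ _), intervalIntegral.integral_const_mul,
            intervalIntegral.integral_const, smul_eq_mul]
  rcases hab.eq_or_lt with rfl | hlt
  · obtain rfl : θ = a := le_antisymm hθ.2 hθ.1
    simp
  · have hpos : 0 < b - a := sub_pos.2 hlt
    calc ‖h θ - h a‖ ^ 2 ≤ I ^ 2 := by gcongr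
      _ ≤ (b - a) * ∫ x in a..b, ‖h' x‖ ^ 2 := by
          have := hquad (I / (b - a))
          field_simp at this
          linarith

lemma polar_mem_closedBall {t : ℝ} (ht : 0 ≤ t) (θ : ℝ) :
    (t * cos θ, t * sin θ) ∈ Metric.closedBall (0 : ℝ × ℝ) t := by
  rw [mem_closedBall_zero_iff, Prod.norm_def, max_le_iff]
  simp only [Real.norm_eq_abs, abs_mul, abs_of_nonneg ht]
  exact ⟨mul_le_of_le_one_right ht (abs_cos_le_one θ),
    mul_le_of_le_one_right ht (abs_sin_le_one θ)⟩

lemma exists_polar_eq {t : ℝ} (ht : 0 ≤ t) {k : ℝ × ℝ} (hk : k.1 ^ 2 + k.2 ^ 2 = t ^ 2) :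
    ∃ θ ∈ Icc (-π) π, k = (t * cos θ, t * sin θ) := by
  set w : ℂ := ⟨k.1, k.2⟩
  have hw : ‖w‖ = t := by
    rw [← sq_eq_sq₀ (norm_nonneg w) ht, Complex.sq_norm, Complex.normSq_apply, ← hk]
    ring
  refine ⟨w.arg, ⟨(Complex.neg_pi_lt_arg w).le, Complex.arg_le_pi w⟩, ?_⟩
  rw [← hw, Complex.norm_mul_cos_arg, Complex.norm_mul_sin_arg]

end Circle

section CourantLebesgue

variable {E : Type*} [NormedAddCommGroup E] [NormedSpace ℝ E] {n : ℝ × ℝ → E}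

lemma norm_fderiv_tangent_sq_le (z : ℝ × ℝ) (t θ : ℝ) :
    ‖fderiv ℝ n z (-(t * sin θ), t * cos θ)‖ ^ 2 ≤ t ^ 2 * energyDensity n z := by
  have hle : ‖fderiv ℝ n z (-(t * sin θ), t * cos θ)‖ ≤
      |t| * (|sin θ| * ‖fderiv ℝ n z (1, 0)‖ + |cos θ| * ‖fderiv ℝ n z (0, 1)‖) := by
    rw [apply_eq_smul_add_smul]
    refine (norm_add_le _ _).trans_eq ?_
    simp only [norm_smul, norm_neg, Real.norm_eq_abs, abs_mul]
    ring
  calc _ ≤ (|t| * (|sin θ| * ‖fderiv ℝ n z (1, 0)‖ + |cos θ| * ‖fderiv ℝ n z (0, 1)‖)) ^ 2 := by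
        gcongr
    _ = t ^ 2 * (|sin θ| * ‖fderiv ℝ n z (1, 0)‖ + |cos θ| * ‖fderiv ℝ n z (0, 1)‖) ^ 2 := by
        rw [mul_pow, sq_abs]
    _ ≤ t ^ 2 * ((|sin θ| ^ 2 + |cos θ| ^ 2) * energyDensity n z) := by
        refine mul_le_mul_of_nonneg_left ?_ (sq_nonneg t)
        unfold energyDensity
        linarith [sq_nonneg
          (|sin θ| * ‖fderiv ℝ n z (0, 1)‖ - |cos θ| * ‖fderiv ℝ n z (1, 0)‖)]
    _ = t ^ 2 * energyDensity n z := by rw [sq_abs, sq_abs, sin_sq_add_cos_sq, one_mul]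

lemma norm_sub_le_of_circle_energy_le [CompleteSpace E] {ρ t μ : ℝ} (ht : 0 < t) (htρ : t < ρ)
    (hμ : 0 ≤ μ) (hn : ContDiffOn ℝ 1 n (Metric.ball 0 ρ))
    {F : ℝ × ℝ → ℝ} (hF : Continuous F)
    (hnF : ∀ z ∈ Metric.closedBall (0 : ℝ × ℝ) t, energyDensity n z ≤ F z)
    (hE : ∫ θ in (-π)..π, t ^ 2 * F (t * cos θ, t * sin θ) ≤ μ ^ 2) {k : ℝ × ℝ}
    (hk : k.1 ^ 2 + k.2 ^ 2 = t ^ 2) : ‖n k - n (-t, 0)‖ ≤ 4 * μ := by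
  obtain ⟨θ, hθ, rfl⟩ := exists_polar_eq ht.le hk
  set γ : ℝ → ℝ × ℝ := fun θ => (t * cos θ, t * sin θ) with hγ
  have hγt : ∀ θ, γ θ ∈ Metric.closedBall 0 t := polar_mem_closedBall ht.le
  have hγρ : ∀ θ, γ θ ∈ Metric.ball 0 ρ := fun θ => Metric.closedBall_subset_ball htρ (hγt θ)
  have hd : ∀ θ, HasDerivAt (fun θ => n (γ θ))
      (fderiv ℝ n (γ θ) (-(t * sin θ), t * cos θ)) θ := fun θ => by
    have hγd : HasDerivAt γ (t * -sin θ, t * cos θ) θ :=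
      ((hasDerivAt_cos θ).const_mul t).prodMk ((hasDerivAt_sin θ).const_mul t)
    rw [mul_neg] at hγd
    exact ((hn.contDiffAt (Metric.isOpen_ball.mem_nhds (hγρ θ))).differentiableAt
      one_ne_zero).hasFDerivAt.comp_hasDerivAt θ hγd
  have hc : Continuous fun θ => fderiv ℝ n (γ θ) (-(t * sin θ), t * cos θ) :=
    ((hn.continuousOn_fderiv_of_isOpen Metric.isOpen_ball le_rfl).comp_continuous
      (by fun_prop) hγρ).clm_apply (by fun_prop)
  have henergy : ∫ θ in (-π)..π, ‖fderiv ℝ n (γ θ) (-(t * sin θ), t * cos θ)‖ ^ 2 ≤ μ ^ 2 := by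
    refine le_trans ?_ hE
    refine intervalIntegral.integral_mono_on (by linarith [pi_pos])
      ((hc.norm.pow 2).intervalIntegrable _ _) (Continuous.intervalIntegrable (by fun_prop) _ _)
      fun θ _ => (norm_fderiv_tangent_sq_le _ t θ).trans ?_
    exact mul_le_mul_of_nonneg_left (hnF _ (hγt θ)) (sq_nonneg t)
  have hosc := norm_sub_sq_le_mul_integral hd hc hθ
  have hstart : γ (-π) = (-t, 0) := by simp [hγ]
  rw [hstart] at hosc
  refine le_of_sq_le_sq (hosc.trans ?_) (by positivity)
  nlinarith [pi_lt_d2, pi_pos]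

lemma continuousOn_energyDensity {U : Set (ℝ × ℝ)} (hU : IsOpen U) (hn : ContDiffOn ℝ 1 n U) :
    ContinuousOn (energyDensity n) U := by
  have hc := hn.continuousOn_fderiv_of_isOpen hU le_rfl
  exact ((hc.clm_apply continuousOn_const).norm.pow 2).add
    ((hc.clm_apply continuousOn_const).norm.pow 2)

end CourantLebesgue

lemma exists_radius_norm_sub_le_on_circle {ρ μ : ℝ} (hρ : 0 < ρ) (hμ : 0 < μ) (C₁ C₂ : ℝ) :
    ∃ δ > 0, ∀ n : ℝ × ℝ → EuclideanSpace ℝ (Fin 3), ContDiffOn ℝ 1 n (Metric.ball 0 ρ) →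
      (∀ z ∈ Metric.ball 0 ρ, ‖n z‖ = 1) → (∀ z ∈ Metric.ball 0 ρ, 0 < n z 2) →
      (∀ z ∈ Metric.ball 0 ρ, energyDensity n z ≤ C₁ - C₂ * sphericalJacobian n z) →
      ∃ t ∈ Icc δ (ρ / 2), ∀ k : ℝ × ℝ, k.1 ^ 2 + k.2 ^ 2 = t ^ 2 →
        ‖n k - n (-t, 0)‖ ≤ 4 * μ := by
  obtain ⟨η, hη, hηc, hηρ, hη1, -⟩ := exists_contDiff_cutoff
    (isCompact_closedBall (0 : ℝ × ℝ) (ρ / 2)) (Metric.isOpen_ball (x := 0) (ε := ρ))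
    (Metric.closedBall_subset_ball (by linarith))
  set Λ := ∫ z, 2 * (C₁ * η z ^ 2 + 2 * C₂ ^ 2 * (pdx η z ^ 2 + pdy η z ^ 2))
  set L := |Λ| / μ ^ 2 + 1 with hL
  have hL0 : 0 < L := by positivity
  have hlog : log (ρ / 2 / (ρ / 2 * exp (-L))) = L := by
    rw [exp_neg, div_mul_cancel_left₀ (by positivity), inv_inv, log_exp]
  have hδ : 0 < ρ / 2 * exp (-L) := by positivity
  refine ⟨_, hδ, fun n hn hunit hpos hE => ?_⟩
  have henergy := integral_sq_mul_energyDensity_le Metric.isOpen_ball hn hunit hpos hE hη hηc hηρ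
  have hzero : ∀ z ∉ tsupport η, η z ^ 2 * energyDensity n z = 0 := fun z hz => by
    simp [image_eq_zero_of_notMem_tsupport hz]
  have hcont : Continuous fun z => η z ^ 2 * energyDensity n z :=
    ContinuousOn.continuous_of_tsupport_subset
      ((hη.continuous.pow 2).continuousOn.mul (continuousOn_energyDensity Metric.isOpen_ball hn))
      Metric.isOpen_ball
      ((closure_minimal (fun z hz => not_imp_comm.1 (hzero z) hz) (isClosed_tsupport η)).trans hηρ)
  obtain ⟨t, ht, hcircle⟩ := exists_circle_integral_le (m := μ ^ 2) hcont
    (hcont.integrable_of_hasCompactSupport (HasCompactSupport.intro hηc hzero))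
    (fun z => by unfold energyDensity; positivity) hδ
    (mul_le_of_le_one_right (by positivity) (exp_le_one_iff.2 (by linarith))) (by
      have hmul : μ ^ 2 * L = |Λ| + μ ^ 2 := by rw [hL]; field_simp
      rw [hlog, hmul]
      linarith [le_abs_self Λ, sq_pos_of_pos hμ])
  refine ⟨t, ht, fun k hk => norm_sub_le_of_circle_energy_le (hδ.trans_le ht.1)
    (by linarith [ht.2]) hμ.le hn hcont (fun z hz => ?_) hcircle hk⟩
  rw [hη1 z (Metric.closedBall_subset_closedBall ht.2 hz), one_pow, one_mul]

/-! ### Second derivatives -/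

section SecondDerivative

variable {E : Type*} [NormedAddCommGroup E] [NormedSpace ℝ E]

lemma second_deriv_nonneg_of_isLocalMin {f f' : ℝ → ℝ} {x m : ℝ}
    (hf : ∀ᶠ y in 𝓝 x, HasDerivAt f (f' y) y) (hf' : HasDerivAt f' m x) (hmin : IsLocalMin f x) :
    0 ≤ m := by
  by_contra! hm
  have hderiv : deriv f =ᶠ[𝓝 x] f' := by
    filter_upwards [hf] with y hy using hy.deriv
  have hsecond : deriv (deriv f) x = m := by rw [hderiv.deriv_eq, hf'.deriv]
  have hmax : IsLocalMax f x := isLocalMax_of_deriv_deriv_neg (by rwa [hsecond])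
    hmin.deriv_eq_zero hf.self_of_nhds.continuousAt
  have hconst : f =ᶠ[𝓝 x] fun _ => f x := by
    filter_upwards [hmin, hmax] with y hle hge using le_antisymm hge hle
  have hzero : deriv (deriv f) x = 0 := by rw [hconst.deriv.deriv_eq]; simp
  exact hm.ne (hsecond.symm.trans hzero)

lemma differentiableAt_fderiv {f : E → ℝ} {z : E} (hf : ContDiffAt ℝ 2 f z) :
    DifferentiableAt ℝ (fderiv ℝ f) z :=
  (hf.fderiv_right (m := 1) (by norm_num)).differentiableAt one_ne_zero

lemma fderiv_fderiv_nonneg_of_isLocalMin {f : E → ℝ} {z : E} (hf : ContDiffAt ℝ 2 f z)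
    (hmin : IsLocalMin f z) (v : E) : 0 ≤ fderiv ℝ (fderiv ℝ f) z v v := by
  set γ : ℝ → E := fun t => z + t • v
  have hγd : ∀ t, HasDerivAt γ v t := fun t => by
    simpa only [one_smul] using ((hasDerivAt_id' t).smul_const v).const_add z
  have hγ0 : γ 0 = z := by simp [γ]
  have hγ : Tendsto γ (𝓝 0) (𝓝 z) := by simpa only [hγ0] using (hγd 0).continuousAt.tendsto
  have hfirst : ∀ᶠ t in 𝓝 (0 : ℝ), HasDerivAt (fun t => f (γ t)) (fderiv ℝ f (γ t) v) t := by
    filter_upwards [hγ.eventually (hf.eventually (by simp))] with t ht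
    exact (ht.differentiableAt two_ne_zero).hasFDerivAt.comp_hasDerivAt t (hγd t)
  have hsecond : HasDerivAt (fun t => fderiv ℝ f (γ t) v) (fderiv ℝ (fderiv ℝ f) z v v) 0 := by
    have hfd := (differentiableAt_fderiv hf).hasFDerivAt
    rw [← hγ0] at hfd ⊢
    simpa using (hfd.comp_hasDerivAt (0 : ℝ) (hγd 0)).clm_apply (hasDerivAt_const (0 : ℝ) v)
  refine second_deriv_nonneg_of_isLocalMin hfirst hsecond ?_
  filter_upwards [hγ.eventually hmin] with t ht
  rwa [hγ0]

lemma fderiv_fderiv_sub {f g : E → ℝ} {z : E} (hf : ContDiffAt ℝ 2 f z)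
    (hg : ContDiffAt ℝ 2 g z) :
    fderiv ℝ (fderiv ℝ fun w => f w - g w) z =
      fderiv ℝ (fderiv ℝ f) z - fderiv ℝ (fderiv ℝ g) z := by
  have hsub : fderiv ℝ (fun w => f w - g w) =ᶠ[𝓝 z] fun w => fderiv ℝ f w - fderiv ℝ g w := by
    filter_upwards [hf.eventually (by simp), hg.eventually (by simp)] with w hfw hgw
    exact fderiv_fun_sub (hfw.differentiableAt two_ne_zero) (hgw.differentiableAt two_ne_zero)
  rw [hsub.fderiv_eq]
  exact fderiv_fun_sub (differentiableAt_fderiv hf) (differentiableAt_fderiv hg)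

lemma fderiv_fderiv_apply {f : E → ℝ} {z : E} (hf : ContDiffAt ℝ 2 f z) (v w : E) :
    fderiv ℝ (fun y => fderiv ℝ f y w) z v = fderiv ℝ (fderiv ℝ f) z v w := by
  rw [fderiv_clm_apply (differentiableAt_fderiv hf) (differentiableAt_const w)]
  simp

lemma fderiv_fderiv_comm {f : E → ℝ} {z : E} (hf : ContDiffAt ℝ 2 f z) (v w : E) :
    fderiv ℝ (fderiv ℝ f) z v w = fderiv ℝ (fderiv ℝ f) z w v :=
  (hf.isSymmSndFDerivAt (by simp)).eq v w

variable {u : ℝ × ℝ → ℝ} {z : ℝ × ℝ}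

lemma pdx_pdy_comm (hu : ContDiffAt ℝ 2 u z) : pdx (pdy u) z = pdy (pdx u) z := by
  have h := fderiv_fderiv_comm hu (1, 0) (0, 1)
  rwa [← fderiv_fderiv_apply hu, ← fderiv_fderiv_apply hu] at h

lemma fderiv_fderiv_eq_quadratic_form (hu : ContDiffAt ℝ 2 u z) (v w : ℝ) :
    fderiv ℝ (fderiv ℝ u) z (v, w) (v, w) =
      pdx (pdx u) z * v ^ 2 + 2 * pdy (pdx u) z * v * w + pdy (pdy u) z * w ^ 2 := by
  rw [apply_eq_smul_add_smul (fderiv ℝ (fderiv ℝ u) z) (v, w), add_apply, smul_apply, smul_apply,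
    apply_eq_smul_add_smul (fderiv ℝ (fderiv ℝ u) z (1, 0)), apply_eq_smul_add_smul
    (fderiv ℝ (fderiv ℝ u) z (0, 1))]
  simp only [← fderiv_fderiv_apply hu, smul_eq_mul]
  change v * (v * pdx (pdx u) z + w * pdx (pdy u) z) +
    w * (v * pdy (pdx u) z + w * pdy (pdy u) z) = _
  rw [pdx_pdy_comm hu]
  ring

end SecondDerivative

section Solution

variable {H : ℝ} {U : Set (ℝ × ℝ)} {u : ℝ × ℝ → ℝ} {z : ℝ × ℝ}

lemma contDiffOn_fderiv_apply (hU : IsOpen U) (hu : ContDiffOn ℝ 2 u U) (v : ℝ × ℝ) :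
    ContDiffOn ℝ 1 (fun z => fderiv ℝ u z v) U :=
  (hu.fderiv_of_isOpen hU (by norm_num)).clm_apply contDiffOn_const

lemma continuousOn_fderiv_fderiv_apply (hU : IsOpen U) (hu : ContDiffOn ℝ 2 u U) (v w : ℝ × ℝ) :
    ContinuousOn (fun z => fderiv ℝ (fun y => fderiv ℝ u y v) z w) U :=
  ((contDiffOn_fderiv_apply hU hu v).continuousOn_fderiv_of_isOpen hU le_rfl).clm_apply
    continuousOn_const

lemma Wgraph_pos (u : ℝ × ℝ → ℝ) (z : ℝ × ℝ) : 0 < Wgraph u z :=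
  sqrt_pos.2 (by positivity)

lemma Wgraph_sq (u : ℝ × ℝ → ℝ) (z : ℝ × ℝ) :
    Wgraph u z ^ 2 = 1 + pdx u z ^ 2 + pdy u z ^ 2 :=
  sq_sqrt (by positivity)

lemma cmc_equation (hu : IsCMCSolution H U u) (hz : z ∈ U) :
    (1 + pdy u z ^ 2) * pdx (pdx u) z - 2 * pdx u z * pdy u z * pdy (pdx u) z +
      (1 + pdx u z ^ 2) * pdy (pdy u) z = 2 * H * Wgraph u z ^ 3 := by
  have hpow : (1 + pdx u z ^ 2 + pdy u z ^ 2) ^ ((3 : ℝ) / 2) = Wgraph u z ^ 3 := by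
    rw [← Wgraph_sq, ← rpow_natCast, ← rpow_mul (Wgraph_pos u z).le, ← rpow_natCast]
    norm_num
  exact (hu.2 z hz).trans (by rw [hpow])

lemma fderiv_comp_add_add_const (u : ℝ × ℝ → ℝ) (a : ℝ × ℝ) (c : ℝ) (z : ℝ × ℝ) :
    fderiv ℝ (fun z => u (z + a) + c) z = fderiv ℝ u (z + a) := by
  rw [fderiv_add_const, fderiv_comp_add_right]

lemma Wgraph_comp_add_add_const (u : ℝ × ℝ → ℝ) (a : ℝ × ℝ) (c : ℝ) (z : ℝ × ℝ) :
    Wgraph (fun z => u (z + a) + c) z = Wgraph u (z + a) := by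
  simp only [Wgraph, pdx, pdy, fderiv_comp_add_add_const]

lemma isCMCSolution_comp_add_add_const (hu : IsCMCSolution H U u) (a : ℝ × ℝ) (c : ℝ) :
    IsCMCSolution H ((· + a) ⁻¹' U) fun z => u (z + a) + c := by
  refine ⟨?_, fun z hz => ?_⟩
  · exact (hu.1.comp (contDiff_id.add contDiff_const).contDiffOn fun z hz => hz).add
      contDiffOn_const
  · have h := hu.2 (z + a) hz
    simp only [pdx, pdy, fderiv_comp_add_add_const] at h ⊢
    rw [fderiv_comp_add_right (f := fun q => fderiv ℝ u q (1, 0)),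
      fderiv_comp_add_right (f := fun q => fderiv ℝ u q (0, 1))]
    exact h

end Solution

/-! ### The comparison principle -/

lemma abs_sqrt_pow_three_sub_le {p₁ p₂ q B : ℝ} (hp₁ : |p₁| ≤ B) (hp₂ : |p₂| ≤ B)
    (hq : |q| ≤ B) :
    |√(1 + p₁ ^ 2 + q ^ 2) ^ 3 - √(1 + p₂ ^ 2 + q ^ 2) ^ 3| ≤
      |p₁ - p₂| * (3 * (1 + 2 * B ^ 2)) := by
  set W₁ := √(1 + p₁ ^ 2 + q ^ 2)
  set W₂ := √(1 + p₂ ^ 2 + q ^ 2)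
  have hsq₁ : W₁ ^ 2 = 1 + p₁ ^ 2 + q ^ 2 := sq_sqrt (by positivity)
  have hsq₂ : W₂ ^ 2 = 1 + p₂ ^ 2 + q ^ 2 := sq_sqrt (by positivity)
  have hW₁ : 0 < W₁ := sqrt_pos.2 (by positivity)
  have hW₂ : 0 < W₂ := sqrt_pos.2 (by positivity)
  have hle₁ : |p₁| ≤ W₁ := abs_le_sqrt (by linarith [sq_nonneg q])
  have hle₂ : |p₂| ≤ W₂ := abs_le_sqrt (by linarith [sq_nonneg q])
  have hlip : |W₁ - W₂| ≤ |p₁ - p₂| := by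
    have hprod : |W₁ - W₂| * (W₁ + W₂) = |p₁ - p₂| * |p₁ + p₂| := by
      rw [← abs_of_pos (add_pos hW₁ hW₂), ← abs_mul, ← abs_mul]
      congr 1
      linear_combination hsq₁ - hsq₂
    refine le_of_mul_le_mul_right (hprod.trans_le ?_) (add_pos hW₁ hW₂)
    gcongr
    exact (abs_add_le p₁ p₂).trans (add_le_add hle₁ hle₂)
  have hB₁ := sq_le_sq' (abs_le.1 hp₁).1 (abs_le.1 hp₁).2
  have hB₂ := sq_le_sq' (abs_le.1 hp₂).1 (abs_le.1 hp₂).2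
  have hBq := sq_le_sq' (abs_le.1 hq).1 (abs_le.1 hq).2
  calc |W₁ ^ 3 - W₂ ^ 3| = |W₁ - W₂| * (W₁ ^ 2 + W₁ * W₂ + W₂ ^ 2) := by
        rw [← abs_of_pos (show 0 < W₁ ^ 2 + W₁ * W₂ + W₂ ^ 2 by positivity), ← abs_mul]
        congr 1
        ring
    _ ≤ |p₁ - p₂| * (3 * (1 + 2 * B ^ 2)) := by
        gcongr
        linarith [two_mul_le_add_sq W₁ W₂]

/-- Here `pᵢ, q` and `aᵢ, bᵢ, cᵢ` are the first and second derivatives of two solutions `uᵢ` at a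
minimum of `u₁ - u₂ - ε exp (Λ x)`. -/
lemma le_of_hessian_sub_nonneg {H p₁ q a₁ b₁ c₁ p₂ a₂ b₂ c₂ Λ B : ℝ}
    (he₁ : (1 + q ^ 2) * a₁ - 2 * p₁ * q * b₁ + (1 + p₁ ^ 2) * c₁ =
      2 * H * √(1 + p₁ ^ 2 + q ^ 2) ^ 3)
    (he₂ : (1 + q ^ 2) * a₂ - 2 * p₂ * q * b₂ + (1 + p₂ ^ 2) * c₂ =
      2 * H * √(1 + p₂ ^ 2 + q ^ 2) ^ 3)
    (hlt : p₂ < p₁) (hΛ : 0 ≤ Λ)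
    (hess : ∀ v w : ℝ, 0 ≤ (a₁ - a₂ - (p₁ - p₂) * Λ) * v ^ 2 + 2 * (b₁ - b₂) * v * w +
      (c₁ - c₂) * w ^ 2)
    (hp₁ : |p₁| ≤ B) (hp₂ : |p₂| ≤ B) (hq : |q| ≤ B) (hb₂ : |b₂| ≤ B) (hc₂ : |c₂| ≤ B) :
    Λ ≤ 6 * |H| * (1 + 2 * B ^ 2) + 4 * B ^ 2 := by
  have hd : 0 < p₁ - p₂ := sub_pos.2 hlt
  set X := √(1 + p₁ ^ 2 + q ^ 2) ^ 3 - √(1 + p₂ ^ 2 + q ^ 2) ^ 3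
  have htrace : (p₁ - p₂) * Λ * (1 + q ^ 2) ≤
      2 * H * X + (p₁ - p₂) * (2 * (q * b₂) - p₁ * c₂ - p₂ * c₂) := by
    have := hess 1 0
    have := hess 0 1
    have := hess q (-p₁)
    linarith
  have hcurv : 2 * H * X ≤ (p₁ - p₂) * (6 * |H| * (1 + 2 * B ^ 2)) := by
    calc 2 * H * X ≤ 2 * |H| * |X| := by
          refine (le_abs_self _).trans_eq ?_
          rw [abs_mul, abs_mul, abs_two]
      _ ≤ 2 * |H| * (|p₁ - p₂| * (3 * (1 + 2 * B ^ 2))) := by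
          gcongr
          exact abs_sqrt_pow_three_sub_le hp₁ hp₂ hq
      _ = (p₁ - p₂) * (6 * |H| * (1 + 2 * B ^ 2)) := by
          rw [abs_of_pos hd]
          ring
  have hrest : (p₁ - p₂) * (2 * (q * b₂) - p₁ * c₂ - p₂ * c₂) ≤ (p₁ - p₂) * (4 * B ^ 2) := by
    have hprod : ∀ {x y : ℝ}, |x| ≤ B → |y| ≤ B → |x * y| ≤ B * B := fun hx hy => by
      rw [abs_mul]
      exact mul_le_mul hx hy (abs_nonneg _) ((abs_nonneg _).trans hx)
    refine mul_le_mul_of_nonneg_left ?_ hd.le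
    linarith [(abs_le.1 (hprod hq hb₂)).2, (abs_le.1 (hprod hp₁ hc₂)).1,
      (abs_le.1 (hprod hp₂ hc₂)).1]
  refine le_of_mul_le_mul_left ?_ hd
  calc (p₁ - p₂) * Λ ≤ (p₁ - p₂) * Λ * (1 + q ^ 2) :=
        le_mul_of_one_le_right (by positivity) (by linarith [sq_nonneg q])
    _ ≤ (p₁ - p₂) * (6 * |H| * (1 + 2 * B ^ 2) + 4 * B ^ 2) := by linarith

lemma contDiff_mul_exp_fst (ε Λ : ℝ) : ContDiff ℝ 2 fun w : ℝ × ℝ => ε * exp (Λ * w.1) := by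
  fun_prop

lemma fderiv_mul_exp_fst (ε Λ : ℝ) : fderiv ℝ (fun w : ℝ × ℝ => ε * exp (Λ * w.1)) =
    fun w => (Λ * ε * exp (Λ * w.1)) • ContinuousLinearMap.fst ℝ ℝ ℝ := by
  ext1 w
  have hinner : HasFDerivAt (fun w : ℝ × ℝ => Λ * w.1) (Λ • ContinuousLinearMap.fst ℝ ℝ ℝ) w :=
    hasFDerivAt_fst.const_mul Λ
  rw [(hinner.exp.const_mul ε).fderiv, smul_smul, smul_smul]
  congr 1
  ring

lemma fderiv_fderiv_mul_exp_fst (ε Λ : ℝ) (z v : ℝ × ℝ) :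
    fderiv ℝ (fderiv ℝ fun w : ℝ × ℝ => ε * exp (Λ * w.1)) z v v =
      Λ ^ 2 * ε * exp (Λ * z.1) * v.1 ^ 2 := by
  have hscalar : HasFDerivAt (fun w : ℝ × ℝ => Λ * ε * exp (Λ * w.1))
      ((Λ * (Λ * ε) * exp (Λ * z.1)) • ContinuousLinearMap.fst ℝ ℝ ℝ) z := by
    rw [← congrFun (fderiv_mul_exp_fst (Λ * ε) Λ) z]
    exact DifferentiableAt.hasFDerivAt (by fun_prop)
  rw [fderiv_mul_exp_fst, (hscalar.smul_const (ContinuousLinearMap.fst ℝ ℝ ℝ)).fderiv]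
  simp only [ContinuousLinearMap.smulRight_apply, smul_apply, ContinuousLinearMap.coe_fst',
    smul_eq_mul]
  ring

section Comparison

variable {H : ℝ} {U V K : Set (ℝ × ℝ)} {u₁ u₂ : ℝ × ℝ → ℝ}

lemma le_of_isLocalMin_sub_exp {ε Λ B : ℝ} {z : ℝ × ℝ} (hU : IsOpen U) (hV : IsOpen V)
    (h₁ : IsCMCSolution H U u₁) (h₂ : IsCMCSolution H V u₂) (hzU : z ∈ U) (hzV : z ∈ V)
    (hε : 0 < ε) (hΛ : 0 < Λ) (hmin : IsLocalMin (fun w => u₁ w - u₂ w - ε * exp (Λ * w.1)) z)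
    (hp₁ : |pdx u₁ z| ≤ B) (hp₂ : |pdx u₂ z| ≤ B) (hq : |pdy u₂ z| ≤ B)
    (hb : |pdy (pdx u₂) z| ≤ B) (hc : |pdy (pdy u₂) z| ≤ B) :
    Λ ≤ 6 * |H| * (1 + 2 * B ^ 2) + 4 * B ^ 2 := by
  have hu₁ : ContDiffAt ℝ 2 u₁ z := h₁.1.contDiffAt (hU.mem_nhds hzU)
  have hu₂ : ContDiffAt ℝ 2 u₂ z := h₂.1.contDiffAt (hV.mem_nhds hzV)
  have hexp := (contDiff_mul_exp_fst ε Λ).contDiffAt (x := z)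
  have hcrit := hmin.fderiv_eq_zero
  rw [fderiv_fun_sub ((hu₁.sub hu₂).differentiableAt two_ne_zero)
    (hexp.differentiableAt two_ne_zero), fderiv_fun_sub (hu₁.differentiableAt two_ne_zero)
    (hu₂.differentiableAt two_ne_zero), fderiv_mul_exp_fst] at hcrit
  have hp : pdx u₁ z - pdx u₂ z = Λ * ε * exp (Λ * z.1) := by
    simpa [sub_eq_zero, pdx] using DFunLike.congr_fun hcrit (1, 0)
  have hqq : pdy u₁ z = pdy u₂ z := by
    simpa [sub_eq_zero, pdy] using DFunLike.congr_fun hcrit (0, 1)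
  have he₁ := cmc_equation h₁ hzU
  have he₂ := cmc_equation h₂ hzV
  rw [Wgraph, hqq] at he₁
  refine le_of_hessian_sub_nonneg he₁ he₂ (sub_pos.1 (hp ▸ by positivity)) hΛ.le (fun v w => ?_)
    hp₁ hp₂ hq hb hc
  have hess := fderiv_fderiv_nonneg_of_isLocalMin ((hu₁.sub hu₂).sub hexp) hmin (v, w)
  rw [fderiv_fderiv_sub (hu₁.sub hu₂) hexp, fderiv_fderiv_sub hu₁ hu₂, sub_apply, sub_apply,
    sub_apply, sub_apply, fderiv_fderiv_eq_quadratic_form hu₁, fderiv_fderiv_eq_quadratic_form hu₂,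
    fderiv_fderiv_mul_exp_fst] at hess
  rw [hp]
  linarith

/-- If `u₁ - u₂` dropped below its boundary bound, then so would `u₁ - u₂ - ε exp (Λ x)` for a
small `ε`, and it would have an interior minimum, which is impossible when `Λ` is large. -/
lemma comparison_principle (hU : IsOpen U) (hV : IsOpen V) (h₁ : IsCMCSolution H U u₁)
    (h₂ : IsCMCSolution H V u₂) (hK : IsCompact K) (hKU : K ⊆ U) (hKV : K ⊆ V) {m : ℝ}
    (hm : ∀ z ∈ frontier K, m ≤ u₁ z - u₂ z) : ∀ z ∈ K, m ≤ u₁ z - u₂ z := by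
  intro z₀ hz₀
  by_contra! hlt
  have hpd : ∀ {W : Set (ℝ × ℝ)} {u : ℝ × ℝ → ℝ}, IsOpen W → IsCMCSolution H W u → ∀ v,
      ContinuousOn (fun z => fderiv ℝ u z v) W := fun hW hu v =>
    (contDiffOn_fderiv_apply hW hu.1 v).continuousOn
  have hpd₂ := continuousOn_fderiv_fderiv_apply hV h₂.1
  obtain ⟨B, hB⟩ := hK.exists_bound_of_continuousOn
    (((hpd hU h₁ (1, 0)).mono hKU).prodMk (((hpd hV h₂ (1, 0)).mono hKV).prodMk
      (((hpd hV h₂ (0, 1)).mono hKV).prodMk (((hpd₂ (1, 0) (0, 1)).mono hKV).prodMk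
        ((hpd₂ (0, 1) (0, 1)).mono hKV)))))
  simp only [Prod.norm_def, sup_le_iff, Real.norm_eq_abs] at hB
  set Λ := 6 * |H| * (1 + 2 * B ^ 2) + 4 * B ^ 2 + 1
  have hΛ0 : 0 < Λ := by positivity
  have hexp : Continuous fun z : ℝ × ℝ => exp (Λ * z.1) := by fun_prop
  obtain ⟨M, hM⟩ := hK.exists_bound_of_continuousOn hexp.continuousOn
  simp only [Real.norm_eq_abs, abs_exp] at hM
  have hM0 : 0 < M := (exp_pos _).trans_le (hM z₀ hz₀)
  set ε := (m - (u₁ z₀ - u₂ z₀)) / M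
  have hε0 : 0 < ε := div_pos (by linarith) hM0
  have hεM : ε * M = m - (u₁ z₀ - u₂ z₀) := div_mul_cancel₀ _ hM0.ne'
  obtain ⟨z, hz, hzmin⟩ := hK.exists_isMinOn ⟨z₀, hz₀⟩
    (f := fun z => u₁ z - u₂ z - ε * exp (Λ * z.1))
    (((h₁.1.continuousOn.mono hKU).sub (h₂.1.continuousOn.mono hKV)).sub
      (continuousOn_const.mul hexp.continuousOn))
  have hinterior : z ∈ interior K := by
    by_contra hzi
    have hfrontier := hm z (hK.isClosed.frontier_eq ▸ ⟨hz, hzi⟩)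
    have hle : u₁ z - u₂ z - ε * exp (Λ * z.1) ≤ u₁ z₀ - u₂ z₀ - ε * exp (Λ * z₀.1) :=
      hzmin hz₀
    linarith [mul_le_mul_of_nonneg_left (hM z hz) hε0.le, mul_pos hε0 (exp_pos (Λ * z₀.1))]
  obtain ⟨hp₁, hp₂, hq, hb, hc⟩ := hB z hz
  linarith [le_of_isLocalMin_sub_exp hU hV h₁ h₂ (hKU hz) (hKV hz) hε0 hΛ0
    (hzmin.isLocalMin (mem_interior_iff_mem_nhds.1 hinterior)) hp₁ hp₂ hq hb hc]

end Comparison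

section HalfSpace

lemma exists_uniform_difference_quotient {E F : Type*} [NormedAddCommGroup E] [NormedSpace ℝ E]
    [ProperSpace E] [NormedAddCommGroup F] [NormedSpace ℝ F] {f : E → F} {U K : Set E}
    (hU : IsOpen U) (hf : ContDiffOn ℝ 1 f U) (hK : IsCompact K) (hKU : K ⊆ U) (v : E) {σ : ℝ}
    (hσ : 0 < σ) :
    ∃ h > 0, ∀ z ∈ K, z + h • v ∈ U ∧ ‖f (z + h • v) - f z - h • fderiv ℝ f z v‖ ≤ h * σ := by
  obtain ⟨ε, hε, hεU⟩ := hK.exists_cthickening_subset_open hU hKU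
  obtain ⟨δ, hδ, hδf⟩ := Metric.uniformContinuousOn_iff.1
    ((hK.cthickening (r := ε)).uniformContinuousOn_of_continuous
      ((hf.continuousOn_fderiv_of_isOpen hU le_rfl).mono hεU)) (σ / (‖v‖ + 1)) (by positivity)
  set h := min ε δ / (2 * (‖v‖ + 1))
  have hh : 0 < h := by positivity
  have hhv : h * ‖v‖ < min ε δ := by
    calc h * ‖v‖ < h * (2 * (‖v‖ + 1)) := by
          gcongr
          linarith [norm_nonneg v]
      _ = min ε δ := div_mul_cancel₀ _ (by positivity)
  refine ⟨h, hh, fun z hz => ?_⟩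
  have hnorm : ‖z + h • v - z‖ = h * ‖v‖ := by
    rw [add_sub_cancel_left, norm_smul, Real.norm_of_nonneg hh.le]
  have hball : Metric.closedBall z (h * ‖v‖) ⊆ Metric.cthickening ε K := fun w hw =>
    Metric.mem_cthickening_of_dist_le w z ε K hz
      (hw.trans (hhv.le.trans (min_le_left _ _)))
  have hend : z + h • v ∈ Metric.closedBall z (h * ‖v‖) := mem_closedBall_iff_norm.2 hnorm.le
  refine ⟨hεU (hball hend), ?_⟩
  have hmean := (convex_closedBall z (h * ‖v‖)).norm_image_sub_le_of_norm_fderiv_le'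
    (𝕜 := ℝ) (φ := fderiv ℝ f z) (C := σ / (‖v‖ + 1))
    (fun w hw => (hf.contDiffAt (hU.mem_nhds (hεU (hball hw)))).differentiableAt one_ne_zero)
    (fun w hw => dist_eq_norm (fderiv ℝ f w) _ ▸ (hδf w (hball hw) z
      (Metric.self_subset_cthickening K hz)
      (lt_of_le_of_lt hw (hhv.trans_le (min_le_right _ _)))).le)
    (Metric.mem_closedBall_self (by positivity)) hend
  rw [hnorm, add_sub_cancel_left, map_smul] at hmean
  refine hmean.trans ?_
  rw [div_mul_eq_mul_div, div_le_iff₀ (by positivity)]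
  nlinarith [norm_nonneg v, mul_pos hσ hh]

variable {H : ℝ} {U K : Set (ℝ × ℝ)} {u : ℝ × ℝ → ℝ}

/-- The comparison principle for the solution and its translate in the direction `(v, c)` of space,
in the limit of infinitesimal translations. -/
lemma add_fderiv_nonneg_of_frontier (hU : IsOpen U) (hu : IsCMCSolution H U u) (hK : IsCompact K)
    (hKU : K ⊆ U) (v : ℝ × ℝ) (c : ℝ) (hfrontier : ∀ z ∈ frontier K, 0 ≤ c + fderiv ℝ u z v) :
    ∀ z ∈ K, 0 ≤ c + fderiv ℝ u z v := by
  intro z₀ hz₀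
  refine le_of_forall_pos_le_add fun σ hσ => ?_
  obtain ⟨h, hh, hquot⟩ := exists_uniform_difference_quotient hU (hu.1.of_le one_le_two) hK hKU v
    (half_pos hσ)
  have hdiff : ∀ z ∈ K, |u (z + h • v) - u z - h * fderiv ℝ u z v| ≤ h * (σ / 2) :=
    fun z hz => (hquot z hz).2
  have htranslate := isCMCSolution_comp_add_add_const hu (h • v) (h * c)
  have hle := comparison_principle (hU.preimage (continuous_add_const _)) hU htranslate hu hK
    (fun z hz => (hquot z hz).1) hKU (m := -(h * (σ / 2))) (fun z hz => by
      have := (abs_le.1 (hdiff z (hK.isClosed.frontier_subset hz))).1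
      linarith [mul_nonneg hh.le (hfrontier z hz)]) z₀ hz₀
  refine le_of_mul_le_mul_left ?_ hh
  linarith [(abs_le.1 (hdiff z₀ hz₀)).2]

end HalfSpace

/-! ### The Gauss map of a graph -/

/-- The upward unit normal of the graph of `u`, that is `normalVec u` as a vector of Euclidean
space. -/
def gaussMap (u : ℝ × ℝ → ℝ) (z : ℝ × ℝ) : EuclideanSpace ℝ (Fin 3) :=
  !₂[-pdx u z * (Wgraph u z)⁻¹, -pdy u z * (Wgraph u z)⁻¹, (Wgraph u z)⁻¹]

/-- The Gaussian curvature of the graph of `u`, as a function on the plane. -/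
def gaussCurvature (u : ℝ × ℝ → ℝ) (z : ℝ × ℝ) : ℝ :=
  (pdx (pdx u) z * pdy (pdy u) z - pdy (pdx u) z ^ 2) / Wgraph u z ^ 4

lemma gaussMap_apply_two (u : ℝ × ℝ → ℝ) (z : ℝ × ℝ) : gaussMap u z 2 = (Wgraph u z)⁻¹ := rfl

lemma inv_Wgraph_sq_mul (u : ℝ × ℝ → ℝ) (z : ℝ × ℝ) :
    (Wgraph u z)⁻¹ ^ 2 * (1 + pdx u z ^ 2 + pdy u z ^ 2) = 1 := by
  rw [← Wgraph_sq, ← mul_pow, inv_mul_cancel₀ (Wgraph_pos u z).ne', one_pow]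

lemma norm_gaussMap (u : ℝ × ℝ → ℝ) (z : ℝ × ℝ) : ‖gaussMap u z‖ = 1 := by
  have hsq : ‖gaussMap u z‖ ^ 2 = 1 ^ 2 := by
    rw [EuclideanSpace.real_norm_sq_eq, Fin.sum_univ_three]
    change (-pdx u z * (Wgraph u z)⁻¹) ^ 2 + (-pdy u z * (Wgraph u z)⁻¹) ^ 2 +
      (Wgraph u z)⁻¹ ^ 2 = 1 ^ 2
    linear_combination inv_Wgraph_sq_mul u z
  exact (pow_left_inj₀ (norm_nonneg _) zero_le_one two_ne_zero).1 hsq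

lemma inner_gaussMap (a : EuclideanSpace ℝ (Fin 3)) (u : ℝ × ℝ → ℝ) (z : ℝ × ℝ) :
    inner ℝ a (gaussMap u z) = (a 2 + fderiv ℝ u z (-a 0, -a 1)) * (Wgraph u z)⁻¹ := by
  rw [PiLp.inner_apply, Fin.sum_univ_three, apply_eq_smul_add_smul]
  change -pdx u z * (Wgraph u z)⁻¹ * a 0 + -pdy u z * (Wgraph u z)⁻¹ * a 1 +
    (Wgraph u z)⁻¹ * a 2 = (a 2 + (-a 0 * pdx u z + -a 1 * pdy u z)) * (Wgraph u z)⁻¹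
  ring

section Differentiability

variable {U : Set (ℝ × ℝ)} {u : ℝ × ℝ → ℝ}

lemma contDiffOn_Wgraph (hU : IsOpen U) (hu : ContDiffOn ℝ 2 u U) :
    ContDiffOn ℝ 1 (Wgraph u) U :=
  ((contDiffOn_const.add ((contDiffOn_fderiv_apply hU hu (1, 0)).pow 2)).add
    ((contDiffOn_fderiv_apply hU hu (0, 1)).pow 2)).sqrt
      fun z _ => (by positivity : (0 : ℝ) < 1 + pdx u z ^ 2 + pdy u z ^ 2).ne'

lemma contDiffOn_inv_Wgraph (hU : IsOpen U) (hu : ContDiffOn ℝ 2 u U) :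
    ContDiffOn ℝ 1 (fun z => (Wgraph u z)⁻¹) U :=
  (contDiffOn_Wgraph hU hu).inv fun z _ => (Wgraph_pos u z).ne'

lemma contDiffOn_gaussMap (hU : IsOpen U) (hu : ContDiffOn ℝ 2 u U) :
    ContDiffOn ℝ 1 (gaussMap u) U := by
  have hinv := contDiffOn_inv_Wgraph hU hu
  refine contDiffOn_euclidean.2 fun i => ?_
  fin_cases i
  · exact (contDiffOn_fderiv_apply hU hu (1, 0)).neg.mul hinv
  · exact (contDiffOn_fderiv_apply hU hu (0, 1)).neg.mul hinv
  · exact hinv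

end Differentiability

section Derivative

variable {u : ℝ × ℝ → ℝ} {z : ℝ × ℝ}

lemma differentiableAt_fderiv_apply (hu : ContDiffAt ℝ 2 u z) (v : ℝ × ℝ) :
    DifferentiableAt ℝ (fun w => fderiv ℝ u w v) z :=
  (differentiableAt_fderiv hu).clm_apply (differentiableAt_const v)

lemma fderiv_pdx_apply (u : ℝ × ℝ → ℝ) (z v : ℝ × ℝ) :
    fderiv ℝ (pdx u) z v = v.1 * pdx (pdx u) z + v.2 * pdy (pdx u) z :=
  apply_eq_smul_add_smul _ v

lemma fderiv_pdy_apply (hu : ContDiffAt ℝ 2 u z) (v : ℝ × ℝ) :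
    fderiv ℝ (pdy u) z v = v.1 * pdy (pdx u) z + v.2 * pdy (pdy u) z := by
  rw [← pdx_pdy_comm hu]
  exact apply_eq_smul_add_smul _ v

lemma hasFDerivAt_Wgraph (hu : ContDiffAt ℝ 2 u z) : HasFDerivAt (Wgraph u)
    ((Wgraph u z)⁻¹ • (pdx u z • fderiv ℝ (pdx u) z + pdy u z • fderiv ℝ (pdy u) z)) z := by
  have hp : HasFDerivAt (pdx u) (fderiv ℝ (pdx u) z) z :=
    (differentiableAt_fderiv_apply hu (1, 0)).hasFDerivAt
  have hq : HasFDerivAt (pdy u) (fderiv ℝ (pdy u) z) z :=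
    (differentiableAt_fderiv_apply hu (0, 1)).hasFDerivAt
  have hsqrt := (((hp.pow 2).const_add 1).add (hq.pow 2)).sqrt
    (by positivity : (0 : ℝ) < 1 + pdx u z ^ 2 + pdy u z ^ 2).ne'
  refine hsqrt.congr_fderiv ?_
  change (1 / (2 * Wgraph u z)) • _ = _
  rw [← Nat.cast_smul_eq_nsmul ℝ, ← Nat.cast_smul_eq_nsmul ℝ]
  module

lemma hasFDerivAt_inv_Wgraph (hu : ContDiffAt ℝ 2 u z) :
    HasFDerivAt (fun w => (Wgraph u w)⁻¹) (-(Wgraph u z)⁻¹ ^ 3 •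
      (pdx u z • fderiv ℝ (pdx u) z + pdy u z • fderiv ℝ (pdy u) z)) z := by
  refine (HasDerivAt.comp_hasFDerivAt (f := Wgraph u) z (hasDerivAt_inv (𝕜 := ℝ)
    (Wgraph_pos u z).ne') (hasFDerivAt_Wgraph hu)).congr_fderiv ?_
  rw [smul_smul, ← inv_pow, neg_mul, ← pow_succ]

lemma fderiv_gaussMap_apply_two (hu : ContDiffAt ℝ 2 u z) (v : ℝ × ℝ) :
    fderiv ℝ (fun w => gaussMap u w 2) z v = -(Wgraph u z)⁻¹ ^ 3 *
      (pdx u z * fderiv ℝ (pdx u) z v + pdy u z * fderiv ℝ (pdy u) z v) :=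
  DFunLike.congr_fun (hasFDerivAt_inv_Wgraph hu).fderiv v

lemma fderiv_gaussMap_apply_zero (hu : ContDiffAt ℝ 2 u z) (v : ℝ × ℝ) :
    fderiv ℝ (fun w => gaussMap u w 0) z v = -(Wgraph u z)⁻¹ ^ 3 *
      ((1 + pdy u z ^ 2) * fderiv ℝ (pdx u) z v -
        pdx u z * pdy u z * fderiv ℝ (pdy u) z v) := by
  have hmul := ((differentiableAt_fderiv_apply hu (1, 0)).hasFDerivAt.neg).mul
    (hasFDerivAt_inv_Wgraph hu)
  refine (DFunLike.congr_fun hmul.fderiv v).trans ?_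
  change -pdx u z * (-(Wgraph u z)⁻¹ ^ 3 * (pdx u z * fderiv ℝ (pdx u) z v +
    pdy u z * fderiv ℝ (pdy u) z v)) + (Wgraph u z)⁻¹ * -fderiv ℝ (pdx u) z v = _
  linear_combination ((Wgraph u z)⁻¹ * fderiv ℝ (pdx u) z v) * inv_Wgraph_sq_mul u z

lemma fderiv_gaussMap_apply_one (hu : ContDiffAt ℝ 2 u z) (v : ℝ × ℝ) :
    fderiv ℝ (fun w => gaussMap u w 1) z v = -(Wgraph u z)⁻¹ ^ 3 *
      ((1 + pdx u z ^ 2) * fderiv ℝ (pdy u) z v -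
        pdx u z * pdy u z * fderiv ℝ (pdx u) z v) := by
  have hmul := ((differentiableAt_fderiv_apply hu (0, 1)).hasFDerivAt.neg).mul
    (hasFDerivAt_inv_Wgraph hu)
  refine (DFunLike.congr_fun hmul.fderiv v).trans ?_
  change -pdy u z * (-(Wgraph u z)⁻¹ ^ 3 * (pdx u z * fderiv ℝ (pdx u) z v +
    pdy u z * fderiv ℝ (pdy u) z v)) + (Wgraph u z)⁻¹ * -fderiv ℝ (pdy u) z v = _
  linear_combination ((Wgraph u z)⁻¹ * fderiv ℝ (pdy u) z v) * inv_Wgraph_sq_mul u z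

lemma differentiableAt_gaussMap (hu : ContDiffAt ℝ 2 u z) :
    DifferentiableAt ℝ (gaussMap u) z := by
  have hinv := (hasFDerivAt_inv_Wgraph hu).differentiableAt
  refine differentiableAt_euclidean.2 fun i => ?_
  fin_cases i
  · exact (differentiableAt_fderiv_apply hu (1, 0)).neg.mul hinv
  · exact (differentiableAt_fderiv_apply hu (0, 1)).neg.mul hinv
  · exact hinv

lemma norm_fderiv_gaussMap_sq (hu : ContDiffAt ℝ 2 u z) (v : ℝ × ℝ) :
    ‖fderiv ℝ (gaussMap u) z v‖ ^ 2 = (Wgraph u z)⁻¹ ^ 4 *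
      ((1 + pdy u z ^ 2) * fderiv ℝ (pdx u) z v ^ 2 -
        2 * pdx u z * pdy u z * fderiv ℝ (pdx u) z v * fderiv ℝ (pdy u) z v +
        (1 + pdx u z ^ 2) * fderiv ℝ (pdy u) z v ^ 2) := by
  rw [EuclideanSpace.real_norm_sq_eq, Fin.sum_univ_three]
  simp only [← fderiv_component (differentiableAt_gaussMap hu), fderiv_gaussMap_apply_zero hu,
    fderiv_gaussMap_apply_one hu, fderiv_gaussMap_apply_two hu]
  generalize fderiv ℝ (pdx u) z v = P, fderiv ℝ (pdy u) z v = Q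
  linear_combination (Wgraph u z)⁻¹ ^ 4 * ((1 + pdy u z ^ 2) * P ^ 2 -
    2 * pdx u z * pdy u z * P * Q + (1 + pdx u z ^ 2) * Q ^ 2) * inv_Wgraph_sq_mul u z

lemma jacobian_gaussMap (hu : ContDiffAt ℝ 2 u z) :
    jacobian (fun w => gaussMap u w 0) (fun w => gaussMap u w 1) z = gaussCurvature u z := by
  change fderiv ℝ _ z (1, 0) * fderiv ℝ _ z (0, 1) - fderiv ℝ _ z (0, 1) * fderiv ℝ _ z (1, 0) = _
  simp only [fderiv_gaussMap_apply_zero hu, fderiv_gaussMap_apply_one hu, fderiv_pdx_apply,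
    fderiv_pdy_apply hu, gaussCurvature, div_eq_inv_mul, ← inv_pow]
  linear_combination ((Wgraph u z)⁻¹ ^ 4 * (pdx (pdx u) z * pdy (pdy u) z -
    pdy (pdx u) z ^ 2)) * inv_Wgraph_sq_mul u z

end Derivative

section CurvatureBound

lemma sq_add_sq_sub_nonneg (p q P Q : ℝ) :
    0 ≤ (1 + q ^ 2) * P ^ 2 - 2 * p * q * P * Q + (1 + p ^ 2) * Q ^ 2 := by
  linarith [sq_nonneg P, sq_nonneg Q, sq_nonneg (q * P - p * Q)]

/-- The difference of the two sides is the left-hand side for the vector obtained from `(v, w)` by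
a rotation in the tangent plane of the graph. -/
lemma shape_operator_norm_sq_le (p q a b c v w : ℝ) :
    ((1 + q ^ 2) * (v * a + w * b) ^ 2 - 2 * p * q * (v * a + w * b) * (v * b + w * c) +
      (1 + p ^ 2) * (v * b + w * c) ^ 2) * (1 + p ^ 2 + q ^ 2) ≤
    (((1 + q ^ 2) * a - 2 * p * q * b + (1 + p ^ 2) * c) ^ 2 -
      2 * (1 + p ^ 2 + q ^ 2) * (a * c - b ^ 2)) * (v ^ 2 + w ^ 2 + (v * p + w * q) ^ 2) := by
  rw [← sub_nonneg]
  refine (sq_add_sq_sub_nonneg p q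
    (a * (-(p * q * v + (1 + q ^ 2) * w)) + b * ((1 + p ^ 2) * v + p * q * w))
    (b * (-(p * q * v + (1 + q ^ 2) * w)) + c * ((1 + p ^ 2) * v + p * q * w))).trans_eq ?_
  ring

variable {H : ℝ} {U : Set (ℝ × ℝ)} {u : ℝ × ℝ → ℝ} {z : ℝ × ℝ}

lemma norm_fderiv_gaussMap_sq_le (hU : IsOpen U) (hu : IsCMCSolution H U u) (hz : z ∈ U)
    (v : ℝ × ℝ) :
    ‖fderiv ℝ (gaussMap u) z v‖ ^ 2 ≤ (4 * H ^ 2 - 2 * gaussCurvature u z) *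
      (v.1 ^ 2 + v.2 ^ 2 + fderiv ℝ u z v ^ 2) := by
  have huz : ContDiffAt ℝ 2 u z := hu.1.contDiffAt (hU.mem_nhds hz)
  have hW := Wgraph_pos u z
  have hshape := shape_operator_norm_sq_le (pdx u z) (pdy u z) (pdx (pdx u) z) (pdy (pdx u) z)
    (pdy (pdy u) z) v.1 v.2
  rw [cmc_equation hu hz, ← Wgraph_sq] at hshape
  rw [norm_fderiv_gaussMap_sq huz, fderiv_pdx_apply, fderiv_pdy_apply huz,
    apply_eq_smul_add_smul (fderiv ℝ u z), gaussCurvature]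
  change _ ≤ _ * (v.1 ^ 2 + v.2 ^ 2 + (v.1 * pdx u z + v.2 * pdy u z) ^ 2)
  have hscaled := mul_le_mul_of_nonneg_left hshape (pow_pos (inv_pos.2 hW) 6).le
  refine (le_of_eq ?_).trans (hscaled.trans_eq ?_)
  · field_simp
  · field_simp
    ring

lemma gaussCurvature_le (hU : IsOpen U) (hu : IsCMCSolution H U u) (hz : z ∈ U) :
    gaussCurvature u z ≤ 2 * H ^ 2 := by
  have hnonneg := (sq_nonneg _).trans (norm_fderiv_gaussMap_sq_le hU hu hz (1, 0))
  have hpos : 0 < (1 : ℝ) ^ 2 + 0 ^ 2 + fderiv ℝ u z (1, 0) ^ 2 := by positivity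
  linarith [nonneg_of_mul_nonneg_left hnonneg hpos]

lemma inner_gaussMap_nonneg_of_frontier {K : Set (ℝ × ℝ)} (hU : IsOpen U)
    (hu : IsCMCSolution H U u) (hK : IsCompact K) (hKU : K ⊆ U) (a : EuclideanSpace ℝ (Fin 3))
    (hfrontier : ∀ z ∈ frontier K, 0 ≤ inner ℝ a (gaussMap u z)) :
    ∀ z ∈ K, 0 ≤ inner ℝ a (gaussMap u z) := by
  simp only [inner_gaussMap, mul_nonneg_iff_of_pos_right (inv_pos.2 (Wgraph_pos u _))]
    at hfrontier ⊢
  exact add_fderiv_nonneg_of_frontier hU hu hK hKU _ _ hfrontier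

end CurvatureBound

section DualCone

variable {E : Type*} [NormedAddCommGroup E] [InnerProductSpace ℝ E] {A : Set E} {N ν : E} {ε : ℝ}

-- Test `hhull` on `2 ε ‖w‖ N - w`, where `w` is the component of `ν` orthogonal to `N`.
lemma norm_sub_inner_smul_le (hN : ‖N‖ = 1) (hε₀ : 0 ≤ ε)
    (hA : ∀ n ∈ A, 1 / 2 ≤ inner ℝ N n ∧ ‖n - N‖ ≤ ε)
    (hhull : ∀ a, (∀ n ∈ A, 0 ≤ inner ℝ a n) → 0 ≤ inner ℝ a ν) :
    ‖ν - inner ℝ N ν • N‖ ≤ 2 * ε * inner ℝ N ν := by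
  set c := inner ℝ N ν
  have hc : 0 ≤ c := hhull N fun n hn => by linarith [(hA n hn).1]
  set w := ν - c • N
  have hwN : inner ℝ w N = 0 := by
    simp [w, inner_sub_left, inner_smul_left, real_inner_comm, hN, c]
  have hwν : inner ℝ w ν = ‖w‖ * ‖w‖ := by
    rw [← real_inner_self_eq_norm_mul_norm, ← add_zero (inner ℝ w w), ← mul_zero c, ← hwN,
      ← real_inner_smul_right, ← inner_add_right, sub_add_cancel]
  have htest := hhull ((2 * ε * ‖w‖) • N - w) fun n hn => by
    have hwn : inner ℝ w n ≤ ‖w‖ * ε := by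
      rw [← sub_zero (inner ℝ w n), ← hwN, ← inner_sub_right]
      exact (real_inner_le_norm w _).trans (mul_le_mul_of_nonneg_left (hA n hn).2 (norm_nonneg w))
    rw [inner_sub_left, real_inner_smul_left]
    linarith [mul_le_mul_of_nonneg_left (hA n hn).1 (by positivity : 0 ≤ 2 * ε * ‖w‖)]
  rw [inner_sub_left, real_inner_smul_left, hwν] at htest
  rcases (norm_nonneg w).eq_or_lt with hw | hw
  · rw [← hw]
    positivity
  · exact le_of_mul_le_mul_left (by linarith) hw

lemma norm_sub_le_of_inner_nonneg (hN : ‖N‖ = 1) (hν : ‖ν‖ = 1) (hε₀ : 0 ≤ ε) (hε : ε ≤ 1 / 2)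
    (hA : ∀ n ∈ A, ‖n‖ = 1 ∧ ‖n - N‖ ≤ ε)
    (hhull : ∀ a, (∀ n ∈ A, 0 ≤ inner ℝ a n) → 0 ≤ inner ℝ a ν) : ‖ν - N‖ ≤ 3 * ε := by
  have hinner : ∀ n ∈ A, 1 / 2 ≤ inner ℝ N n := fun n hn => by
    have hsq := norm_sub_sq_real n N
    rw [(hA n hn).1, hN, real_inner_comm] at hsq
    nlinarith [(hA n hn).2, norm_nonneg (n - N)]
  have hnormal := norm_sub_inner_smul_le hN hε₀ (fun n hn => ⟨hinner n hn, (hA n hn).2⟩) hhull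
  set c := inner ℝ N ν
  have hc : c ≤ 1 := (real_inner_le_norm N ν).trans_eq (by rw [hN, hν, mul_one])
  have hnormal_le : ‖ν - c • N‖ ≤ 2 * ε := hnormal.trans (mul_le_of_le_one_right (by positivity) hc)
  have hnormal_sq : ‖ν - c • N‖ ^ 2 = 1 - c ^ 2 := by
    rw [norm_sub_sq_real, norm_smul, hN, hν, inner_smul_right, real_inner_comm, mul_one,
      norm_eq_abs, sq_abs]
    ring
  have hc₀ : 0 ≤ c := hhull N fun n hn => by linarith [hinner n hn]
  have hdist : ‖ν - N‖ ^ 2 = 2 - 2 * c := by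
    rw [norm_sub_sq_real, hν, hN, real_inner_comm]
    ring
  refine (abs_le_of_sq_le_sq' ?_ (by positivity)).2
  nlinarith [norm_nonneg (ν - c • N), hnormal_le]

end DualCone

/-! ### Lifting rays through a local diffeomorphism -/

section Lifting

variable {E F G : Type*} [NormedAddCommGroup E] [NormedSpace ℝ E] [NormedAddCommGroup F]
  [NormedSpace ℝ F] [NormedAddCommGroup G] [NormedSpace ℝ G]

lemma hasDerivWithinAt_fst_of_snd_deriv_eq_zero {α : ℝ → E × F} {X : E × F → E} {x₀ : E × F}
    (h0 : α 0 = x₀)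
    (hα : ∀ t ∈ Icc (0 : ℝ) 1, HasDerivWithinAt α (X (α t), 0) (Icc 0 1) t) :
    ∀ t ∈ Icc (0 : ℝ) 1,
      HasDerivWithinAt (fun t => (α t).1) (X ((α t).1, x₀.2)) (Icc 0 1) t := by
  intro t ht
  have hconst := norm_image_sub_le_of_norm_deriv_le_segment' (C := 0) (f := fun t => (α t).2)
    (fun t ht => (ContinuousLinearMap.snd ℝ E F).hasFDerivAt.comp_hasDerivWithinAt t (hα t ht))
    (fun t _ => by simp) t ht
  rw [zero_mul, norm_le_zero_iff, sub_eq_zero, h0] at hconst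
  rw [← hconst]
  exact (ContinuousLinearMap.fst ℝ E F).hasFDerivAt.comp_hasDerivWithinAt t (hα t ht)

lemma exists_isPicardLindelof_of_norm_le [ProperSpace E] {X : E → E} (hX : ContDiff ℝ 1 X)
    {r : NNReal} (hr : ∀ x ∈ Metric.closedBall 0 (2 * r), ‖X x‖ ≤ r) :
    ∃ K, IsPicardLindelof (fun _ => X) (⟨0, by simp⟩ : Icc (0 : ℝ) 1) 0 (2 * r) r r K := by
  obtain ⟨K, hK⟩ := hX.contDiffOn.exists_lipschitzOnWith one_ne_zero
    (convex_closedBall (0 : E) (2 * r)) (isCompact_closedBall _ _)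
  refine ⟨K, IsPicardLindelof.of_time_independent hr hK ?_⟩
  change (r : ℝ) * max (1 - 0) (0 - 0) ≤ 2 * r - r
  rw [sub_zero, sub_zero, max_eq_left zero_le_one]
  linarith

/-- The parameter `k` is made part of the state and rescaled by `2 * C`, so that the
Picard-Lindelöf theorem applies on the whole time interval. -/
lemma exists_flow_of_bounded [FiniteDimensional ℝ E] [FiniteDimensional ℝ F] {B : E → F →L[ℝ] E}
    (hB : ContDiff ℝ 1 B) {C ρ : ℝ} (hC : 0 < C) (hBC : ∀ z, ‖B z‖ ≤ C) (hρ : 0 ≤ ρ) :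
    ∃ Γ : F → ℝ → E, (∀ k ∈ Metric.closedBall 0 ρ, Γ k 0 = 0 ∧
      ∀ t ∈ Icc (0 : ℝ) 1, HasDerivWithinAt (Γ k) (B (Γ k t) k) (Icc 0 1) t) ∧
      ContinuousOn (fun k => Γ k 1) (Metric.closedBall 0 ρ) := by
  have := FiniteDimensional.complete ℝ E
  have := FiniteDimensional.complete ℝ F
  have := FiniteDimensional.proper ℝ (E × F)
  set X : E × F → E := fun x => (2 * C)⁻¹ • B x.1 x.2
  have hX : ContDiff ℝ 1 fun x => (X x, (0 : F)) :=
    (((hB.comp contDiff_fst).clm_apply contDiff_snd).const_smul _).prodMk contDiff_const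
  have hXk : ∀ z k, X (z, (2 * C) • k) = B z k := fun z k => by
    simp only [X, map_smul, smul_smul]
    rw [inv_mul_cancel₀ (by positivity), one_smul]
  let r : NNReal := ⟨2 * C * ρ, by positivity⟩
  have hbound : ∀ x ∈ Metric.closedBall (0 : E × F) (2 * r), ‖(X x, (0 : F))‖ ≤ r := by
    intro x hx
    have hx2 : ‖x.2‖ ≤ 2 * (2 * C * ρ) := (norm_snd_le x).trans (mem_closedBall_zero_iff.1 hx)
    rw [Prod.norm_mk, norm_zero, norm_smul, Real.norm_of_nonneg (by positivity)]
    refine max_le ?_ r.2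
    calc (2 * C)⁻¹ * ‖B x.1 x.2‖ ≤ (2 * C)⁻¹ * (C * (2 * (2 * C * ρ))) := by
          gcongr
          exact ((B x.1).le_opNorm x.2).trans (mul_le_mul (hBC _) hx2 (norm_nonneg _) hC.le)
      _ = 2 * C * ρ := by field_simp
  obtain ⟨K, hPL⟩ := exists_isPicardLindelof_of_norm_le hX hbound
  obtain ⟨α, hα, L, hL⟩ := hPL.exists_forall_mem_closedBall_eq_hasDerivWithinAt_lipschitzOnWith
  have hmem : ∀ k ∈ Metric.closedBall (0 : F) ρ,
      ((0 : E), (2 * C) • k) ∈ Metric.closedBall (0 : E × F) r := by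
    intro k hk
    rw [mem_closedBall_zero_iff] at hk ⊢
    rw [Prod.norm_mk, norm_zero, norm_smul, Real.norm_of_nonneg (by positivity)]
    exact max_le r.2 (mul_le_mul_of_nonneg_left hk (by positivity))
  refine ⟨fun k t => (α (0, (2 * C) • k) t).1, fun k hk => ?_, ?_⟩
  · obtain ⟨h0, hderiv⟩ := hα _ (hmem k hk)
    refine ⟨congrArg Prod.fst h0, fun t ht => ?_⟩
    rw [← hXk]
    exact hasDerivWithinAt_fst_of_snd_deriv_eq_zero h0 hderiv t ht
  · exact continuous_fst.comp_continuousOn ((hL 1 (by simp)).continuousOn.comp (by fun_prop) hmem)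

lemma exists_mapsTo_Icc_of_continuousOn {X : Type*} [TopologicalSpace X] {U : Set X}
    (hU : IsOpen U) {γ : ℝ → X} {a b x y : ℝ} (hγ : ContinuousOn γ (Icc a b)) (hx : x ∈ Ico a b)
    (hxy : x < y) (hxU : γ x ∈ U) : ∃ c ∈ Ioc x y, c ≤ b ∧ MapsTo γ (Icc x c) U := by
  have hnhds : γ ⁻¹' U ∈ 𝓝[≥] x :=
    ((hγ x (Ico_subset_Icc_self hx)).mono_of_mem_nhdsWithin
      (mem_of_superset (Icc_mem_nhdsGE hx.2) (Icc_subset_Icc_left hx.1))).preimage_mem_nhdsWithin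
      (hU.mem_nhds hxU)
  obtain ⟨d, hxd, hd⟩ := mem_nhdsGE_iff_exists_Icc_subset.1 hnhds
  exact ⟨min d (min y b),
    ⟨lt_min hxd (lt_min hxy hx.2), (min_le_right _ _).trans (min_le_left _ _)⟩,
    (min_le_right _ _).trans (min_le_right _ _),
    fun t ht => hd ⟨ht.1, ht.2.trans (min_le_left _ _)⟩⟩

lemma mem_and_norm_comp_le_of_hasDerivWithinAt {U : Set E} (hU : IsOpen U) {f : E → G}
    (hf : DifferentiableOn ℝ f U) {M R : ℝ} (hK : IsCompact {z ∈ U | ‖f z‖ ≤ R}) (hM : 0 ≤ M)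
    (hMR : M ≤ R) {γ γ' : ℝ → E}
    (hγ : ∀ t ∈ Icc (0 : ℝ) 1, HasDerivWithinAt γ (γ' t) (Icc 0 1) t) (h0U : γ 0 ∈ U)
    (h0 : f (γ 0) = 0) (hγ' : ∀ t ∈ Icc (0 : ℝ) 1, γ t ∈ U → ‖fderiv ℝ f (γ t) (γ' t)‖ ≤ M) :
    ∀ t ∈ Icc (0 : ℝ) 1, γ t ∈ U ∧ ‖f (γ t)‖ ≤ M * t := by
  have hγc : ContinuousOn γ (Icc 0 1) := fun t ht => (hγ t ht).continuousWithinAt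
  refine IsClosed.Icc_subset_of_forall_exists_gt (s := {t | γ t ∈ U ∧ ‖f (γ t)‖ ≤ M * t})
    ?_ ⟨h0U, by simp [h0]⟩ ?_
  · have hclosed : IsClosed (Icc 0 1 ∩ γ ⁻¹' {z ∈ U | ‖f z‖ ≤ R}) :=
      hγc.preimage_isClosed_of_isClosed isClosed_Icc hK.isClosed
    convert hclosed.isClosed_le (f := fun t => ‖f (γ t)‖) (g := fun t => M * t)
      (hf.continuousOn.comp (hγc.mono inter_subset_left) fun t ht => ht.2.1).norm
      (by fun_prop) using 1
    ext t
    constructor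
    · rintro ⟨⟨htU, hle⟩, ht⟩
      exact ⟨⟨ht, htU, hle.trans ((mul_le_of_le_one_right hM ht.2).trans hMR)⟩, hle⟩
    · rintro ⟨⟨ht, htU, -⟩, hle⟩
      exact ⟨⟨htU, hle⟩, ht⟩
  · rintro x ⟨⟨hxU, hx⟩, hx0, hx1⟩ y hy
    obtain ⟨c, hc, hc1, hcU⟩ := exists_mapsTo_Icc_of_continuousOn hU hγc ⟨hx0, hx1⟩ hy hxU
    have hxc : x < c := hc.1
    have hmem : ∀ t ∈ Icc x c, t ∈ Icc (0 : ℝ) 1 := fun t ht => ⟨hx0.trans ht.1, ht.2.trans hc1⟩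
    have hmean := norm_image_sub_le_of_norm_deriv_le_segment' (f := fun t => f (γ t))
      (fun t ht => ((hf.differentiableAt (hU.mem_nhds (hcU ht))).hasFDerivAt
        |>.comp_hasDerivWithinAt t ((hγ t (hmem t ht)).mono hmem)))
      (fun t ht => hγ' t (hmem t (Ico_subset_Icc_self ht)) (hcU (Ico_subset_Icc_self ht)))
      c (right_mem_Icc.2 hxc.le)
    refine ⟨c, ⟨hcU (right_mem_Icc.2 hxc.le), ?_⟩, hc⟩
    linarith [norm_sub_norm_le (f (γ c)) (f (γ x))]

lemma contDiffOn_inverse [FiniteDimensional ℝ E] {U : Set E} {ψ' : E → E →L[ℝ] F}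
    (hψ' : ContDiffOn ℝ 1 ψ' U) (hinv : ∀ z ∈ U, (ψ' z).IsInvertible) :
    ContDiffOn ℝ 1 (fun z => (ψ' z).inverse) U := fun z hz => by
  have := FiniteDimensional.complete ℝ E
  obtain ⟨e, he⟩ := hinv z hz
  have hsmooth : ContDiffAt ℝ 1 ContinuousLinearMap.inverse (ψ' z) :=
    he ▸ contDiffAt_map_inverse e
  exact hsmooth.comp_contDiffWithinAt z (hψ' z hz)

/-- `t ↦ s (t • k)` solves `γ' = (ψ' γ)⁻¹ k`. The bound on `f` along `γ` keeps the solution in a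
compact subset of `U`. -/
lemma exists_continuousOn_section [FiniteDimensional ℝ E] [FiniteDimensional ℝ F] {U : Set E}
    (hU : IsOpen U) (h0U : 0 ∈ U) {ψ : E → F} {ψ' : E → E →L[ℝ] F} (hψ0 : ψ 0 = 0)
    (hψ : ∀ z ∈ U, HasFDerivAt ψ (ψ' z) z) (hψ' : ContDiffOn ℝ 1 ψ' U)
    (hinv : ∀ z ∈ U, (ψ' z).IsInvertible) {f : E → G} (hf : DifferentiableOn ℝ f U)
    (hf0 : f 0 = 0) {C ρ : ℝ} (hC : 0 ≤ C) (hρ : 0 ≤ ρ)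
    (hfψ : ∀ z ∈ U, ∀ v, ‖fderiv ℝ f z v‖ ≤ C * ‖ψ' z v‖)
    (hK : IsCompact {z ∈ U | ‖f z‖ ≤ C * ρ}) :
    ∃ s : F → E, ContinuousOn s (Metric.closedBall 0 ρ) ∧
      ∀ k ∈ Metric.closedBall 0 ρ, s k ∈ U ∧ ‖f (s k)‖ ≤ C * ‖k‖ ∧ ψ (s k) = k := by
  obtain ⟨χ, hχ, hχc, hχU, hχK, hχ01⟩ := exists_contDiff_cutoff hK hU fun z hz => hz.1
  set B : E → F →L[ℝ] E := fun z => χ z • (ψ' z).inverse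
  have hB : ContDiff ℝ 1 B := contDiff_smul_of_tsupport_subset hU hχ hχU
    (contDiffOn_inverse hψ' hinv)
  obtain ⟨M, hM⟩ := (show HasCompactSupport B from hχc.smul_right).exists_bound_of_continuous
    hB.continuous
  obtain ⟨Γ, hΓ, hΓc⟩ := exists_flow_of_bounded hB (C := |M| + 1) (by positivity)
    (fun z => by linarith [hM z, le_abs_self M]) hρ
  have hψB : ∀ z ∈ U, ∀ k, ψ' z (B z k) = χ z • k := fun z hz k => by
    rw [smul_apply, map_smul, (hinv z hz).self_apply_inverse]
  refine ⟨fun k => Γ k 1, hΓc, fun k hk => ?_⟩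
  obtain ⟨h0, hΓk⟩ := hΓ k hk
  have hkρ : C * ‖k‖ ≤ C * ρ := by
    rw [mem_closedBall_zero_iff] at hk
    gcongr
  have hconfined := mem_and_norm_comp_le_of_hasDerivWithinAt hU hf hK (by positivity) hkρ hΓk
    (h0 ▸ h0U) (by rw [h0, hf0]) fun t _ htU => (hfψ _ htU _).trans <| by
      rw [hψB _ htU, norm_smul, Real.norm_of_nonneg (hχ01 _).1]
      exact mul_le_mul_of_nonneg_left
        (mul_le_of_le_one_left (norm_nonneg k) (hχ01 _).2) hC
  have hψΓ := norm_image_sub_le_of_norm_deriv_le_segment' (C := 0) (a := (0 : ℝ)) (b := 1)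
    (f := fun t => ψ (Γ k t) - t • k) (f' := fun _ => 0) (fun t ht => by
      obtain ⟨htU, hle⟩ := hconfined t ht
      have hχ1 : χ (Γ k t) = 1 := hχK _ ⟨htU, hle.trans
        ((mul_le_of_le_one_right (by positivity) ht.2).trans hkρ)⟩
      have hcomp := ((hψ _ htU).comp_hasDerivWithinAt t (hΓk t ht)).sub
        ((hasDerivWithinAt_id t (Icc (0 : ℝ) 1)).smul_const k)
      rwa [hψB _ htU, hχ1, sub_self] at hcomp)
    (fun t _ => by rw [norm_zero]) 1 (right_mem_Icc.2 zero_le_one)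
  rw [zero_mul, norm_le_zero_iff, h0, hψ0, one_smul, zero_smul, sub_zero, sub_zero,
    sub_eq_zero] at hψΓ
  obtain ⟨hU1, hle⟩ := hconfined 1 (right_mem_Icc.2 zero_le_one)
  exact ⟨hU1, hle.trans_eq (mul_one _), hψΓ⟩

lemma contDiffOn_succ_of_hasFDerivAt_comp {n : ℕ} {U : Set E} {V : Set F} (hV : IsOpen V)
    {B : E → F →L[ℝ] E} (hB : ContDiffOn ℝ n B U) {s : F → E} (hsU : MapsTo s V U)
    (hs : ∀ k ∈ V, HasFDerivAt s (B (s k)) k) : ContDiffOn ℝ (n + 1) s V := by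
  have hfderiv : ∀ k ∈ V, fderiv ℝ s k = B (s k) := fun k hk => (hs k hk).fderiv
  have hdiff : DifferentiableOn ℝ s V :=
    fun k hk => (hs k hk).differentiableAt.differentiableWithinAt
  refine (contDiffOn_succ_iff_fderiv_of_isOpen hV).2
    ⟨hdiff, by simp, ContDiffOn.congr ?_ hfderiv⟩
  induction n with
  | zero =>
    exact contDiffOn_zero.2 ((contDiffOn_zero.1 hB).comp hdiff.continuousOn hsU)
  | succ n ih =>
    refine hB.comp ?_ hsU
    rw [Nat.cast_succ]
    refine (contDiffOn_succ_iff_fderiv_of_isOpen hV).2 ⟨hdiff, by simp, ?_⟩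
    exact (ih (hB.of_le (by exact_mod_cast n.le_succ))).congr hfderiv

lemma hasFDerivAt_section {U : Set E} {V : Set F} (hV : IsOpen V) {ψ : E → F}
    {ψ' : E → E →L[ℝ] F} (hψ : ∀ z ∈ U, HasFDerivAt ψ (ψ' z) z)
    (hinv : ∀ z ∈ U, (ψ' z).IsInvertible) {s : F → E} (hs : ContinuousOn s V) (hsU : MapsTo s V U)
    (hψs : ∀ k ∈ V, ψ (s k) = k) {k : F} (hk : k ∈ V) :
    HasFDerivAt s (ψ' (s k)).inverse k := by
  obtain ⟨e, he⟩ := hinv (s k) (hsU hk)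
  have hψk := hψ (s k) (hsU hk)
  rw [← he, ContinuousLinearMap.inverse_equiv] at *
  refine hψk.of_local_left_inverse (hs.continuousAt (hV.mem_nhds hk)) ?_
  filter_upwards [hV.mem_nhds hk] with k' hk' using hψs k' hk'

lemma closedBall_subset_image_ball [FiniteDimensional ℝ E] [FiniteDimensional ℝ F] {ψ : E → F}
    {C ρ r : ℝ} (hC : 0 ≤ C) (hρ : 0 ≤ ρ) (hr : C * ρ < r) (hψ0 : ψ 0 = 0)
    (hψ : ContDiffOn ℝ 2 ψ (Metric.ball 0 r))
    (hinv : ∀ z ∈ Metric.ball 0 r, (fderiv ℝ ψ z).IsInvertible)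
    (hbound : ∀ z ∈ Metric.ball 0 r, ∀ v, ‖v‖ ≤ C * ‖fderiv ℝ ψ z v‖) :
    Metric.closedBall 0 ρ ⊆ ψ '' Metric.ball 0 r := by
  have := FiniteDimensional.proper ℝ E
  have hK : {z ∈ Metric.ball (0 : E) r | ‖id z‖ ≤ C * ρ} = Metric.closedBall 0 (C * ρ) := by
    ext z
    rw [mem_closedBall_zero_iff]
    exact ⟨fun hz => hz.2, fun hz => ⟨mem_ball_zero_iff.2 (hz.trans_lt hr), hz⟩⟩
  obtain ⟨s, -, hs⟩ := exists_continuousOn_section Metric.isOpen_ball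
    (Metric.mem_ball_self ((mul_nonneg hC hρ).trans_lt hr)) hψ0
    (fun z hz => ((hψ.differentiableOn two_ne_zero).differentiableAt
      (Metric.isOpen_ball.mem_nhds hz)).hasFDerivAt)
    (hψ.fderiv_of_isOpen Metric.isOpen_ball (by norm_num)) hinv differentiableOn_id rfl hC hρ
    (fun z hz v => by rw [fderiv_id]; exact hbound z hz v) (hK ▸ isCompact_closedBall _ _)
  exact fun k hk => ⟨s k, (hs k hk).1, (hs k hk).2.2⟩

end Lifting

/-! ### The Lewy map -/

/-- The differential `(1 + 2Hu) I + W⁻¹ (I + ∇u ⊗ ∇u)` of the map which turns the surface into a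
quasi-isometric image of a plane domain, in analogy with Lewy's transformation for the minimal
surface equation. -/
def lewyDeriv (H : ℝ) (u : ℝ × ℝ → ℝ) (z : ℝ × ℝ) : ℝ × ℝ →L[ℝ] ℝ × ℝ :=
  (1 + 2 * H * u z + (Wgraph u z)⁻¹) • ContinuousLinearMap.id ℝ (ℝ × ℝ) +
    ((Wgraph u z)⁻¹ • fderiv ℝ u z).smulRight (pdx u z, pdy u z)

lemma lewyDeriv_apply (H : ℝ) (u : ℝ × ℝ → ℝ) (z v : ℝ × ℝ) : lewyDeriv H u z v =
    (1 + 2 * H * u z + (Wgraph u z)⁻¹) • v +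
      ((Wgraph u z)⁻¹ * fderiv ℝ u z v) • (pdx u z, pdy u z) := rfl

lemma eq_of_apply_one_zero_apply_zero_one {E : Type*} [NormedAddCommGroup E] [NormedSpace ℝ E]
    {B : ℝ × ℝ →L[ℝ] ℝ × ℝ →L[ℝ] E} (h : B (1, 0) (0, 1) = B (0, 1) (1, 0)) (v w : ℝ × ℝ) :
    B v w = B w v := by
  rw [apply_eq_smul_add_smul B v, apply_eq_smul_add_smul B w]
  simp only [add_apply, smul_apply]
  rw [apply_eq_smul_add_smul (B (1, 0)) v, apply_eq_smul_add_smul (B (0, 1)) v,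
    apply_eq_smul_add_smul (B (1, 0)) w, apply_eq_smul_add_smul (B (0, 1)) w, h]
  module

section

variable {H : ℝ} {U : Set (ℝ × ℝ)} {u : ℝ × ℝ → ℝ} {z : ℝ × ℝ}

lemma contDiffOn_lewyDeriv (hU : IsOpen U) (hu : ContDiffOn ℝ 2 u U) :
    ContDiffOn ℝ 1 (lewyDeriv H u) U := by
  have hinv := contDiffOn_inv_Wgraph hU hu
  exact (((contDiffOn_const.add (contDiffOn_const.mul (hu.of_le one_le_two))).add hinv).smul
    contDiffOn_const).add ((hinv.smul (hu.fderiv_of_isOpen hU (by norm_num))).smulRight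
      ((contDiffOn_fderiv_apply hU hu (1, 0)).prodMk (contDiffOn_fderiv_apply hU hu (0, 1))))

lemma fderiv_lewyDeriv_apply (hu : ContDiffAt ℝ 2 u z) (v w : ℝ × ℝ) :
    fderiv ℝ (fun y => lewyDeriv H u y w) z v =
      (2 * H * fderiv ℝ u z v - (Wgraph u z)⁻¹ ^ 3 *
        (pdx u z * fderiv ℝ (pdx u) z v + pdy u z * fderiv ℝ (pdy u) z v)) • w +
      (Wgraph u z)⁻¹ • fderiv ℝ u z w • (fderiv ℝ (pdx u) z v, fderiv ℝ (pdy u) z v) +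
      ((Wgraph u z)⁻¹ * fderiv ℝ (fun y => fderiv ℝ u y w) z v - (Wgraph u z)⁻¹ ^ 3 *
        (pdx u z * fderiv ℝ (pdx u) z v + pdy u z * fderiv ℝ (pdy u) z v) * fderiv ℝ u z w) •
          (pdx u z, pdy u z) := by
  have hu' := (hu.differentiableAt two_ne_zero).hasFDerivAt
  have hp : HasFDerivAt (pdx u) (fderiv ℝ (pdx u) z) z :=
    (differentiableAt_fderiv_apply hu (1, 0)).hasFDerivAt
  have hq : HasFDerivAt (pdy u) (fderiv ℝ (pdy u) z) z :=
    (differentiableAt_fderiv_apply hu (0, 1)).hasFDerivAt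
  have hw := hasFDerivAt_inv_Wgraph hu
  have hderiv := ((((hu'.const_mul (2 * H)).const_add 1).fun_add hw).smul_const w).fun_add
    ((hw.fun_mul (differentiableAt_fderiv_apply hu w).hasFDerivAt).fun_smul (hp.prodMk hq))
  refine (DFunLike.congr_fun hderiv.fderiv v).trans ?_
  simp only [add_apply, smul_apply, ContinuousLinearMap.smulRight_apply,
    ContinuousLinearMap.prod_apply, smul_eq_mul]
  module

lemma fderiv_lewyDeriv_comm (hU : IsOpen U) (hu : IsCMCSolution H U u) (hz : z ∈ U)
    (v w : ℝ × ℝ) :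
    fderiv ℝ (lewyDeriv H u) z v w = fderiv ℝ (lewyDeriv H u) z w v := by
  have huz : ContDiffAt ℝ 2 u z := hu.1.contDiffAt (hU.mem_nhds hz)
  have hd : DifferentiableAt ℝ (lewyDeriv H u) z :=
    ((contDiffOn_lewyDeriv hU hu.1).differentiableOn one_ne_zero).differentiableAt
      (hU.mem_nhds hz)
  have hentry : ∀ v w, fderiv ℝ (lewyDeriv H u) z v w =
      fderiv ℝ (fun y => lewyDeriv H u y w) z v := fun v w => by
    rw [fderiv_clm_apply hd (differentiableAt_const w)]
    simp only [fderiv_fun_const, Pi.zero_apply, ContinuousLinearMap.comp_zero, zero_add,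
      ContinuousLinearMap.flip_apply]
  refine eq_of_apply_one_zero_apply_zero_one ?_ v w
  have hunit := inv_Wgraph_sq_mul u z
  have hcmc : ((1 + pdy u z ^ 2) * pdx (pdx u) z - 2 * pdx u z * pdy u z * pdy (pdx u) z +
      (1 + pdx u z ^ 2) * pdy (pdy u) z) * (Wgraph u z)⁻¹ ^ 3 = 2 * H := by
    rw [cmc_equation hu hz, mul_assoc, ← mul_pow, mul_inv_cancel₀ (Wgraph_pos u z).ne', one_pow,
      mul_one]
  have hpdx : fderiv ℝ u z (1, 0) = pdx u z := rfl
  have hpdy : fderiv ℝ u z (0, 1) = pdy u z := rfl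
  have hpdx' : (fun y => fderiv ℝ u y (1, 0)) = pdx u := rfl
  have hpdy' : (fun y => fderiv ℝ u y (0, 1)) = pdy u := rfl
  rw [hentry, hentry, fderiv_lewyDeriv_apply huz, fderiv_lewyDeriv_apply huz, hpdx', hpdy', hpdx,
    hpdy]
  simp only [fderiv_pdx_apply, fderiv_pdy_apply huz]
  generalize (Wgraph u z)⁻¹ = w at *
  ext <;> simp only [one_mul, zero_mul, add_zero, Prod.smul_mk, smul_eq_mul, mul_zero, mul_one,
    Prod.mk_add_mk, zero_add]
  · linear_combination pdy u z * hcmc -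
      (-pdx u z * w * pdy (pdx u) z + pdx (pdx u) z * pdy u z * w) * hunit
  · linear_combination -pdx u z * hcmc +
      (-pdy u z * w * pdy (pdx u) z + pdy (pdy u) z * pdx u z * w) * hunit

end

section Metric

variable {H : ℝ} {u : ℝ × ℝ → ℝ} {z : ℝ × ℝ}

lemma one_le_Wgraph (u : ℝ × ℝ → ℝ) (z : ℝ × ℝ) : 1 ≤ Wgraph u z :=
  Real.one_le_sqrt.2 (by linarith [sq_nonneg (pdx u z), sq_nonneg (pdy u z)])

lemma abs_pdx_le_Wgraph (u : ℝ × ℝ → ℝ) (z : ℝ × ℝ) : |pdx u z| ≤ Wgraph u z :=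
  Real.abs_le_sqrt (by linarith [sq_nonneg (pdy u z)])

lemma abs_pdy_le_Wgraph (u : ℝ × ℝ → ℝ) (z : ℝ × ℝ) : |pdy u z| ≤ Wgraph u z :=
  Real.abs_le_sqrt (by linarith [sq_nonneg (pdx u z)])

lemma fst_sq_add_snd_sq_lewyDeriv (v : ℝ × ℝ) :
    (lewyDeriv H u z v).1 ^ 2 + (lewyDeriv H u z v).2 ^ 2 =
      (1 + 2 * H * u z + (Wgraph u z)⁻¹) ^ 2 * (v.1 ^ 2 + v.2 ^ 2) +
      (2 * (1 + 2 * H * u z + (Wgraph u z)⁻¹) * (Wgraph u z)⁻¹ + 1 - (Wgraph u z)⁻¹ ^ 2) *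
        fderiv ℝ u z v ^ 2 := by
  have hunit := inv_Wgraph_sq_mul u z
  have hu : fderiv ℝ u z v = v.1 * pdx u z + v.2 * pdy u z := apply_eq_smul_add_smul _ v
  rw [lewyDeriv_apply]
  simp only [Prod.fst_add, Prod.snd_add, Prod.smul_fst, Prod.smul_snd, smul_eq_mul, hu]
  generalize (Wgraph u z)⁻¹ = w at *
  linear_combination (v.1 * pdx u z + v.2 * pdy u z) ^ 2 * hunit

lemma graph_metric_le_lewyDeriv (hz : |2 * H * u z| ≤ 1 / 2) (v : ℝ × ℝ) :
    v.1 ^ 2 + v.2 ^ 2 + fderiv ℝ u z v ^ 2 ≤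
      4 * ((lewyDeriv H u z v).1 ^ 2 + (lewyDeriv H u z v).2 ^ 2) := by
  rw [fst_sq_add_snd_sq_lewyDeriv]
  have hw := inv_pos.2 (Wgraph_pos u z)
  set w := (Wgraph u z)⁻¹
  have hβ : 1 / 2 + w ≤ 1 + 2 * H * u z + w := by linarith [(abs_le.1 hz).1]
  generalize 1 + 2 * H * u z + w = β at *
  have hid : 1 / 4 ≤ β ^ 2 := by nlinarith
  have hgrad : 1 / 4 ≤ 2 * β * w + 1 - w ^ 2 := by nlinarith
  linarith [mul_le_mul_of_nonneg_right hid (by positivity : 0 ≤ v.1 ^ 2 + v.2 ^ 2),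
    mul_le_mul_of_nonneg_right hgrad (sq_nonneg (fderiv ℝ u z v))]

lemma norm_graph_le_lewyDeriv (hz : |2 * H * u z| ≤ 1 / 2) (v : ℝ × ℝ) :
    ‖(v, fderiv ℝ u z v)‖ ≤ 3 * ‖lewyDeriv H u z v‖ := by
  have hmetric := graph_metric_le_lewyDeriv hz v
  have hfst := pow_le_pow_left₀ (norm_nonneg _) (norm_fst_le (lewyDeriv H u z v)) 2
  have hsnd := pow_le_pow_left₀ (norm_nonneg _) (norm_snd_le (lewyDeriv H u z v)) 2
  rw [norm_eq_abs, sq_abs] at hfst hsnd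
  have hle : ∀ x : ℝ, x ^ 2 ≤ v.1 ^ 2 + v.2 ^ 2 + fderiv ℝ u z v ^ 2 →
      ‖x‖ ≤ 3 * ‖lewyDeriv H u z v‖ := fun x hx => by
    refine abs_le_of_sq_le_sq ?_ (by positivity)
    linarith [sq_nonneg ‖lewyDeriv H u z v‖]
  exact norm_prod_le_iff.2 ⟨norm_prod_le_iff.2 ⟨hle _ (by nlinarith), hle _ (by nlinarith)⟩,
    hle _ (by nlinarith)⟩

lemma isInvertible_of_norm_le {E : Type*} [NormedAddCommGroup E] [NormedSpace ℝ E]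
    [FiniteDimensional ℝ E] {L : E →L[ℝ] E} {C : ℝ} (hL : ∀ v, ‖v‖ ≤ C * ‖L v‖) :
    L.IsInvertible := by
  have hker : ∀ v, L v = 0 → v = 0 := fun v hv =>
    norm_le_zero_iff.1 ((hL v).trans_eq (by rw [hv, norm_zero, mul_zero]))
  exact ⟨(LinearEquiv.ofInjectiveEndo (L : E →ₗ[ℝ] E)
    ((injective_iff_map_eq_zero L).2 hker)).toContinuousLinearEquiv, rfl⟩

lemma isInvertible_lewyDeriv (hz : |2 * H * u z| ≤ 1 / 2) : (lewyDeriv H u z).IsInvertible :=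
  isInvertible_of_norm_le fun v => (norm_fst_le (v, fderiv ℝ u z v)).trans
    (norm_graph_le_lewyDeriv hz v)

lemma lewyDeriv_cross (v w : ℝ × ℝ) :
    (lewyDeriv H u z v).1 * (lewyDeriv H u z w).2 - (lewyDeriv H u z v).2 * (lewyDeriv H u z w).1 =
      (1 + 2 * H * u z + (Wgraph u z)⁻¹) * (1 + 2 * H * u z + Wgraph u z) *
        (v.1 * w.2 - v.2 * w.1) := by
  have hunit := inv_Wgraph_sq_mul u z
  have hW : Wgraph u z = (Wgraph u z)⁻¹ * (1 + pdx u z ^ 2 + pdy u z ^ 2) := by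
    rw [← Wgraph_sq]
    field_simp
  have hu : ∀ v, fderiv ℝ u z v = v.1 * pdx u z + v.2 * pdy u z := apply_eq_smul_add_smul _
  simp only [lewyDeriv_apply, Prod.fst_add, Prod.snd_add, Prod.smul_fst, Prod.smul_snd,
    smul_eq_mul, hu]
  rw [show 1 + 2 * H * u z + Wgraph u z = _ from congrArg _ hW]
  generalize (Wgraph u z)⁻¹ = w at *
  ring

lemma norm_fderiv_apply_le (u : ℝ × ℝ → ℝ) (z v : ℝ × ℝ) :
    ‖fderiv ℝ u z v‖ ≤ 2 * Wgraph u z * ‖v‖ := by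
  rw [apply_eq_smul_add_smul (fderiv ℝ u z) v]
  calc ‖v.1 • pdx u z + v.2 • pdy u z‖ ≤ ‖v.1‖ * ‖pdx u z‖ + ‖v.2‖ * ‖pdy u z‖ := by
        rw [← norm_smul, ← norm_smul]
        exact norm_add_le _ _
    _ ≤ ‖v‖ * Wgraph u z + ‖v‖ * Wgraph u z := by
        gcongr
        exacts [norm_fst_le v, abs_pdx_le_Wgraph u z, norm_snd_le v, abs_pdy_le_Wgraph u z]
    _ = 2 * Wgraph u z * ‖v‖ := by ring

lemma norm_lewyDeriv_apply_le (hz : |2 * H * u z| ≤ 1 / 2) (v : ℝ × ℝ) :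
    ‖lewyDeriv H u z v‖ ≤ (5 / 2 + 2 * Wgraph u z) * ‖v‖ := by
  have hW := Wgraph_pos u z
  have hinv : (Wgraph u z)⁻¹ ≤ 1 := inv_le_one_of_one_le₀ (one_le_Wgraph u z)
  have hcoef : ‖1 + 2 * H * u z + (Wgraph u z)⁻¹‖ ≤ 5 / 2 := by
    rw [norm_eq_abs, abs_le]
    constructor <;> linarith [abs_le.1 hz, inv_pos.2 hW]
  have hgrad : ‖(pdx u z, pdy u z)‖ ≤ Wgraph u z :=
    norm_prod_le_iff.2 ⟨abs_pdx_le_Wgraph u z, abs_pdy_le_Wgraph u z⟩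
  rw [lewyDeriv_apply]
  calc _ ≤ ‖1 + 2 * H * u z + (Wgraph u z)⁻¹‖ * ‖v‖ +
        (Wgraph u z)⁻¹ * ‖fderiv ℝ u z v‖ * ‖(pdx u z, pdy u z)‖ := by
        refine (norm_add_le _ _).trans_eq ?_
        rw [norm_smul, norm_smul, norm_mul, Real.norm_of_nonneg (inv_pos.2 hW).le]
    _ ≤ 5 / 2 * ‖v‖ + (Wgraph u z)⁻¹ * (2 * Wgraph u z * ‖v‖) * Wgraph u z := by
        gcongr
        exact norm_fderiv_apply_le u z v
    _ = (5 / 2 + 2 * Wgraph u z) * ‖v‖ := by field_simp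

end Metric

/-! ### Lewy charts -/

lemma exists_hasFDerivAt_lewyDeriv {H r : ℝ} {u : ℝ × ℝ → ℝ}
    (hu : IsCMCSolution H (Metric.ball 0 r) u) :
    ∃ ψ : ℝ × ℝ → ℝ × ℝ, ψ 0 = 0 ∧ ∀ z ∈ Metric.ball 0 r, HasFDerivAt ψ (lewyDeriv H u z) z := by
  obtain ⟨ψ, hψ⟩ := (convex_ball (0 : ℝ × ℝ) r).exists_forall_hasFDerivAt_of_fderiv_symmetric
    Metric.isOpen_ball
    ((contDiffOn_lewyDeriv Metric.isOpen_ball hu.1).differentiableOn one_ne_zero)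
    fun z hz => fderiv_lewyDeriv_comm Metric.isOpen_ball hu hz
  exact ⟨fun z => ψ z - ψ 0, sub_self _, fun z hz => (hψ z hz).sub_const _⟩

/-- A local inverse `s`, from `V` to `U`, of the map with differential `lewyDeriv H u`, restricted
to the part of `U` where this differential is well conditioned. -/
structure IsLewyChart (H : ℝ) (u : ℝ × ℝ → ℝ) (U V : Set (ℝ × ℝ)) (s : ℝ × ℝ → ℝ × ℝ) :
    Prop where
  contDiffOn : ContDiffOn ℝ 2 s V
  mapsTo : MapsTo s V U
  abs_le : ∀ k ∈ V, |2 * H * u (s k)| ≤ 1 / 2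
  lewyDeriv_fderiv : ∀ k ∈ V, ∀ v, lewyDeriv H u (s k) (fderiv ℝ s k v) = v

lemma isCompact_graph_norm_le {r d b : ℝ} (hd : d < r) {u : ℝ × ℝ → ℝ}
    (hu : ContinuousOn u (Metric.ball 0 r)) {c : ℝ} (hc : |c| * d < b) :
    IsCompact {z ∈ {z ∈ Metric.ball (0 : ℝ × ℝ) r | |c * u z| < b} | ‖(z, u z)‖ ≤ d} := by
  have hsub : Metric.closedBall (0 : ℝ × ℝ) d ⊆ Metric.ball 0 r :=
    Metric.closedBall_subset_ball hd
  have heq : {z ∈ {z ∈ Metric.ball (0 : ℝ × ℝ) r | |c * u z| < b} | ‖(z, u z)‖ ≤ d} =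
      Metric.closedBall 0 d ∩ u ⁻¹' Metric.closedBall 0 d := by
    ext z
    simp only [mem_ofPred_eq, mem_inter_iff, mem_preimage, mem_closedBall_zero_iff]
    rw [norm_prod_le_iff]
    refine ⟨fun hz => hz.2, fun hz => ⟨⟨hsub (mem_closedBall_zero_iff.2 hz.1), ?_⟩, hz⟩⟩
    rw [abs_mul]
    exact (mul_le_mul_of_nonneg_left hz.2 (abs_nonneg c)).trans_lt hc
  rw [heq]
  exact (isCompact_closedBall _ _).of_isClosed_subset
    ((hu.mono hsub).preimage_isClosed_of_isClosed Metric.isClosed_closedBall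
      Metric.isClosed_closedBall) inter_subset_left

lemma isLewyChart_of_continuousOn_section {H : ℝ} {u : ℝ × ℝ → ℝ} {U V : Set (ℝ × ℝ)}
    (hU : IsOpen U) (hu : ContDiffOn ℝ 2 u U) (hV : IsOpen V) {ψ s : ℝ × ℝ → ℝ × ℝ}
    (hψ : ∀ z ∈ U, HasFDerivAt ψ (lewyDeriv H u z) z) (hs : ContinuousOn s V)
    (hsU : MapsTo s V U) (hψs : ∀ k ∈ V, ψ (s k) = k)
    (habs : ∀ k ∈ V, |2 * H * u (s k)| ≤ 1 / 2) : IsLewyChart H u U V s := by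
  set U' : Set (ℝ × ℝ) := {z ∈ U | |2 * H * u z| ≤ 1 / 2}
  have hsU' : MapsTo s V U' := fun k hk => ⟨hsU hk, habs k hk⟩
  have hinv : ∀ z ∈ U', (lewyDeriv H u z).IsInvertible := fun z hz => isInvertible_lewyDeriv hz.2
  have hderiv : ∀ k ∈ V, HasFDerivAt s (lewyDeriv H u (s k)).inverse k := fun k hk =>
    hasFDerivAt_section hV (fun z hz => hψ z hz.1) hinv hs hsU' hψs hk
  have hL : ContDiffOn ℝ 1 (lewyDeriv H u) U' := (contDiffOn_lewyDeriv hU hu).mono fun z hz => hz.1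
  refine ⟨?_, hsU, habs, fun k hk v => ?_⟩
  · exact contDiffOn_succ_of_hasFDerivAt_comp (n := 1) hV
      (by exact_mod_cast contDiffOn_inverse hL hinv) hsU' hderiv
  · rw [(hderiv k hk).fderiv, (hinv _ (hsU' hk)).self_apply_inverse]

lemma exists_isLewyChart_of_lt {H r ρ : ℝ} (hρ : 0 ≤ ρ) (hρr : 3 * ρ < r)
    (hρH : |2 * H| * (3 * ρ) < 1 / 2) {u : ℝ × ℝ → ℝ} (hu : IsCMCSolution H (Metric.ball 0 r) u)
    (hu0 : u 0 = 0) :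
    ∃ s, IsLewyChart H u (Metric.ball 0 r) (Metric.ball 0 ρ) s ∧ s 0 = 0 := by
  obtain ⟨ψ, hψ0, hψ⟩ := exists_hasFDerivAt_lewyDeriv hu
  set U : Set (ℝ × ℝ) := {z ∈ Metric.ball 0 r | |2 * H * u z| < 1 / 2}
  have hUr : U ⊆ Metric.ball 0 r := fun z hz => hz.1
  have hU : IsOpen U := (continuousOn_const.mul hu.1.continuousOn).abs.isOpen_inter_preimage
    Metric.isOpen_ball isOpen_Iio
  have h0U : (0 : ℝ × ℝ) ∈ U := ⟨Metric.mem_ball_self (by linarith), by simp [hu0]⟩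
  have hdiff : ∀ z ∈ U, HasFDerivAt (fun z => (z, u z)) _ z := fun z hz =>
    (hasFDerivAt_id z).prodMk ((hu.1.differentiableOn two_ne_zero).differentiableAt
      (Metric.isOpen_ball.mem_nhds (hUr hz))).hasFDerivAt
  obtain ⟨s, hs, hsU⟩ := exists_continuousOn_section hU h0U hψ0 (fun z hz => hψ z (hUr hz))
    ((contDiffOn_lewyDeriv Metric.isOpen_ball hu.1).mono hUr)
    (fun z hz => isInvertible_lewyDeriv hz.2.le) (f := fun z => (z, u z))
    (fun z hz => (hdiff z hz).differentiableAt.differentiableWithinAt) (by simp [hu0])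
    zero_le_three hρ (fun z hz v => by
      rw [(hdiff z hz).fderiv]
      exact norm_graph_le_lewyDeriv hz.2.le v)
    (isCompact_graph_norm_le hρr hu.1.continuousOn hρH)
  have hball : Metric.ball (0 : ℝ × ℝ) ρ ⊆ Metric.closedBall 0 ρ := Metric.ball_subset_closedBall
  refine ⟨s, isLewyChart_of_continuousOn_section Metric.isOpen_ball hu.1 Metric.isOpen_ball hψ
    (hs.mono hball) (fun k hk => hUr (hsU k (hball hk)).1) (fun k hk => (hsU k (hball hk)).2.2)
    fun k hk => (hsU k (hball hk)).1.2.le, ?_⟩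
  obtain ⟨-, h0, -⟩ := hsU 0 (Metric.mem_closedBall_self hρ)
  rw [norm_zero, mul_zero] at h0
  exact norm_le_zero_iff.1 ((norm_fst_le _).trans h0)

lemma exists_isLewyChart (H : ℝ) {r : ℝ} (hr : 0 < r) :
    ∃ ρ > 0, ∀ u, IsCMCSolution H (Metric.ball 0 r) u → u 0 = 0 →
      ∃ s, IsLewyChart H u (Metric.ball 0 r) (Metric.ball 0 ρ) s ∧ s 0 = 0 := by
  have hsmall : ∀ c d : ℝ, 0 < d → ∀ᶠ ρ in 𝓝[>] 0, c * (3 * ρ) < d := fun c d hd =>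
    (((by fun_prop : Continuous fun ρ => c * (3 * ρ)).tendsto' 0 0 (by simp)).eventually_lt_const
      hd).filter_mono nhdsWithin_le_nhds
  obtain ⟨ρ, ⟨hρr, hρH⟩, hρ⟩ := (((hsmall 1 r hr).and (hsmall |2 * H| (1 / 2) one_half_pos)).and
    self_mem_nhdsWithin).exists
  exact ⟨ρ, hρ, fun u hu hu0 => exists_isLewyChart_of_lt hρ.le (one_mul (3 * ρ) ▸ hρr) hρH hu hu0⟩

lemma jacobian_comp {f g : ℝ × ℝ → ℝ} {s : ℝ × ℝ → ℝ × ℝ} {k : ℝ × ℝ}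
    (hf : DifferentiableAt ℝ f (s k)) (hg : DifferentiableAt ℝ g (s k))
    (hs : DifferentiableAt ℝ s k) :
    jacobian (fun x => f (s x)) (fun x => g (s x)) k = jacobian f g (s k) *
      ((fderiv ℝ s k (1, 0)).1 * (fderiv ℝ s k (0, 1)).2 -
        (fderiv ℝ s k (1, 0)).2 * (fderiv ℝ s k (0, 1)).1) := by
  have hcomp : ∀ {f : ℝ × ℝ → ℝ}, DifferentiableAt ℝ f (s k) → ∀ v,
      fderiv ℝ (fun x => f (s x)) k v =
        (fderiv ℝ s k v).1 * pdx f (s k) + (fderiv ℝ s k v).2 * pdy f (s k) := fun hf v => by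
    rw [fderiv_fun_comp k hf hs]
    exact apply_eq_smul_add_smul (fderiv ℝ _ (s k)) (fderiv ℝ s k v)
  change fderiv ℝ _ k (1, 0) * fderiv ℝ _ k (0, 1) - fderiv ℝ _ k (0, 1) * fderiv ℝ _ k (1, 0) = _
  rw [hcomp hf, hcomp hf, hcomp hg, hcomp hg, jacobian]
  ring

/-- The ratio of the area of the graph of `u` to that of its image under the Lewy map. -/
def lewyAreaRatio (H : ℝ) (u : ℝ × ℝ → ℝ) (z : ℝ × ℝ) : ℝ :=
  Wgraph u z / ((1 + 2 * H * u z + (Wgraph u z)⁻¹) * (1 + 2 * H * u z + Wgraph u z))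

lemma lewyAreaRatio_mem_Icc {H : ℝ} {u : ℝ × ℝ → ℝ} {z : ℝ × ℝ} (hz : |2 * H * u z| ≤ 1 / 2) :
    lewyAreaRatio H u z ∈ Icc (4 / 25) 2 := by
  have hW := one_le_Wgraph u z
  have hw := inv_pos.2 (Wgraph_pos u z)
  have hw1 : (Wgraph u z)⁻¹ ≤ 1 := inv_le_one_of_one_le₀ hW
  rw [lewyAreaRatio]
  generalize (Wgraph u z)⁻¹ = w at *
  generalize Wgraph u z = W at *
  obtain ⟨hz₁, hz₂⟩ := abs_le.1 hz
  generalize 2 * H * u z = c at *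
  have hle : (1 + c + w) * (1 + c + W) ≤ 5 / 2 * (5 / 2 * W) := by gcongr <;> linarith
  have hge : 1 / 2 * W ≤ (1 + c + w) * (1 + c + W) := by gcongr <;> linarith
  exact ⟨(le_div_iff₀ (by linarith)).2 (by linarith), (div_le_iff₀ (by linarith)).2 (by linarith)⟩

namespace IsLewyChart

variable {H : ℝ} {u : ℝ × ℝ → ℝ} {U V : Set (ℝ × ℝ)} {s : ℝ × ℝ → ℝ × ℝ} {k : ℝ × ℝ}

lemma contDiffAt (hs : IsLewyChart H u U V s) (hV : IsOpen V) (hk : k ∈ V) :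
    ContDiffAt ℝ 2 s k :=
  hs.contDiffOn.contDiffAt (hV.mem_nhds hk)

lemma norm_le_mul_norm_fderiv (hs : IsLewyChart H u U V s) (hk : k ∈ V) (v : ℝ × ℝ) :
    ‖v‖ ≤ (5 / 2 + 2 * Wgraph u (s k)) * ‖fderiv ℝ s k v‖ := by
  have := norm_lewyDeriv_apply_le (hs.abs_le k hk) (fderiv ℝ s k v)
  rwa [hs.lewyDeriv_fderiv k hk] at this

lemma isInvertible_fderiv (hs : IsLewyChart H u U V s) (hk : k ∈ V) :
    (fderiv ℝ s k).IsInvertible :=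
  isInvertible_of_norm_le (hs.norm_le_mul_norm_fderiv hk)

lemma det_fderiv_mul_Wgraph (hs : IsLewyChart H u U V s) (hk : k ∈ V) :
    ((fderiv ℝ s k (1, 0)).1 * (fderiv ℝ s k (0, 1)).2 -
      (fderiv ℝ s k (1, 0)).2 * (fderiv ℝ s k (0, 1)).1) * Wgraph u (s k) =
    lewyAreaRatio H u (s k) := by
  have hcross := lewyDeriv_cross (H := H) (u := u) (z := s k) (fderiv ℝ s k (1, 0))
    (fderiv ℝ s k (0, 1))
  rw [hs.lewyDeriv_fderiv k hk, hs.lewyDeriv_fderiv k hk, mul_one, mul_zero, sub_zero] at hcross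
  rw [lewyAreaRatio, eq_div_iff (left_ne_zero_of_mul_eq_one hcross.symm), mul_right_comm,
    mul_comm _ ((1 + _ + _) * _), ← hcross, one_mul]

lemma sphericalJacobian_gaussMap_comp (hs : IsLewyChart H u U V s) (hU : IsOpen U) (hV : IsOpen V)
    (hu : ContDiffOn ℝ 2 u U) (hk : k ∈ V) :
    sphericalJacobian (fun x => gaussMap u (s x)) k =
      gaussCurvature u (s k) * lewyAreaRatio H u (s k) := by
  have huz : ContDiffAt ℝ 2 u (s k) := hu.contDiffAt (hU.mem_nhds (hs.mapsTo hk))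
  have hn := differentiableAt_gaussMap huz
  rw [sphericalJacobian, jacobian_comp (differentiableAt_component hn 0)
    (differentiableAt_component hn 1) ((hs.contDiffAt hV hk).differentiableAt two_ne_zero),
    jacobian_gaussMap huz, gaussMap_apply_two, div_inv_eq_mul, mul_assoc,
    hs.det_fderiv_mul_Wgraph hk]

lemma energyDensity_gaussMap_comp_le (hs : IsLewyChart H u U V s) (hU : IsOpen U) (hV : IsOpen V)
    (hu : IsCMCSolution H U u) (hk : k ∈ V) :
    energyDensity (fun x => gaussMap u (s x)) k ≤ 8 * (4 * H ^ 2 - 2 * gaussCurvature u (s k)) := by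
  have hz := hs.mapsTo hk
  have hK := gaussCurvature_le hU hu hz
  have hn := differentiableAt_gaussMap (hu.1.contDiffAt (hU.mem_nhds hz))
  have hle : ∀ v : ℝ × ℝ, ‖fderiv ℝ (fun x => gaussMap u (s x)) k v‖ ^ 2 ≤
      (4 * H ^ 2 - 2 * gaussCurvature u (s k)) * (4 * (v.1 ^ 2 + v.2 ^ 2)) := fun v => by
    rw [fderiv_fun_comp k hn ((hs.contDiffAt hV hk).differentiableAt two_ne_zero)]
    refine (norm_fderiv_gaussMap_sq_le hU hu hz (fderiv ℝ s k v)).trans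
      (mul_le_mul_of_nonneg_left ?_ (by linarith))
    refine (graph_metric_le_lewyDeriv (hs.abs_le k hk) (fderiv ℝ s k v)).trans_eq ?_
    rw [hs.lewyDeriv_fderiv k hk]
  rw [energyDensity]
  linarith [hle (1, 0), hle (0, 1)]

lemma energyDensity_gaussMap_comp_le_sub (hs : IsLewyChart H u U V s) (hU : IsOpen U)
    (hV : IsOpen V) (hu : IsCMCSolution H U u) (hk : k ∈ V) :
    energyDensity (fun x => gaussMap u (s x)) k ≤
      400 * H ^ 2 - 100 * sphericalJacobian (fun x => gaussMap u (s x)) k := by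
  refine (hs.energyDensity_gaussMap_comp_le hU hV hu hk).trans ?_
  rw [hs.sphericalJacobian_gaussMap_comp hU hV hu.1 hk]
  obtain ⟨hj₁, hj₂⟩ := lewyAreaRatio_mem_Icc (hs.abs_le k hk)
  have hK := gaussCurvature_le hU hu (hs.mapsTo hk)
  linarith [mul_nonneg (sub_nonneg.2 hK) (sub_nonneg.2 hj₁),
    mul_nonneg (sq_nonneg H) (sub_nonneg.2 hj₂)]

end IsLewyChart

/-! ### The gradient estimate -/

lemma frontier_image_subset {X Y : Type*} [TopologicalSpace X] [TopologicalSpace Y] {f : X → Y}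
    {D : Set X} (hclosed : IsClosed (f '' D)) (hopen : ∀ x ∈ D, map f (𝓝 x) = 𝓝 (f x)) :
    frontier (f '' D) ⊆ f '' frontier D := by
  rintro y ⟨hy, hy_int⟩
  obtain ⟨x, hx, rfl⟩ := hclosed.closure_eq ▸ hy
  refine mem_image_of_mem f ⟨subset_closure hx, fun hx_int => hy_int ?_⟩
  rw [mem_interior_iff_mem_nhds, ← hopen x hx] at *
  exact image_mem_map hx_int

lemma norm_le_enorm2 (p : ℝ × ℝ) : ‖p‖ ≤ enorm2 p :=
  norm_prod_le_iff.2 ⟨Real.abs_le_sqrt (by linarith [sq_nonneg p.2]),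
    Real.abs_le_sqrt (by linarith [sq_nonneg p.1])⟩

lemma enorm2_le_two_mul_norm (p : ℝ × ℝ) : enorm2 p ≤ 2 * ‖p‖ := by
  have hfst : p.1 ^ 2 ≤ ‖p‖ ^ 2 := sq_le_sq.2 ((norm_fst_le p).trans (le_abs_self _))
  have hsnd : p.2 ^ 2 ≤ ‖p‖ ^ 2 := sq_le_sq.2 ((norm_snd_le p).trans (le_abs_self _))
  exact Real.sqrt_le_iff.2 ⟨by positivity, by nlinarith⟩

lemma continuous_enorm2 : Continuous enorm2 := by
  unfold enorm2
  fun_prop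

lemma isCompact_enorm2_le (t : ℝ) : IsCompact {k | enorm2 k ≤ t} :=
  (isCompact_closedBall (0 : ℝ × ℝ) t).of_isClosed_subset
    (isClosed_le continuous_enorm2 continuous_const) fun k hk =>
      mem_closedBall_zero_iff.2 ((norm_le_enorm2 k).trans hk)

lemma sq_add_sq_of_mem_frontier_enorm2_le {k : ℝ × ℝ} {t : ℝ}
    (hk : k ∈ frontier {k | enorm2 k ≤ t}) : k.1 ^ 2 + k.2 ^ 2 = t ^ 2 := by
  have hkt : enorm2 k = t := frontier_le_subset_eq continuous_enorm2 continuous_const hk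
  rw [← hkt, enorm2, Real.sq_sqrt (by positivity)]

lemma norm_gaussMap_sub_le_of_frontier {H ε : ℝ} {u : ℝ × ℝ → ℝ} {U K : Set (ℝ × ℝ)}
    {N : EuclideanSpace ℝ (Fin 3)} (hU : IsOpen U) (hu : IsCMCSolution H U u) (hK : IsCompact K)
    (hKU : K ⊆ U) (hN : ‖N‖ = 1) (hε₀ : 0 ≤ ε) (hε : ε ≤ 1 / 2)
    (hfrontier : ∀ z ∈ frontier K, ‖gaussMap u z - N‖ ≤ ε) :
    ∀ z ∈ K, ‖gaussMap u z - N‖ ≤ 3 * ε := fun z hz => by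
  refine norm_sub_le_of_inner_nonneg (A := gaussMap u '' frontier K) hN (norm_gaussMap u z) hε₀ hε
    (forall_mem_image.2 fun w hw => ⟨norm_gaussMap u w, hfrontier w hw⟩) fun a ha => ?_
  exact inner_gaussMap_nonneg_of_frontier hU hu hK hKU a
    (fun w hw => ha _ (mem_image_of_mem _ hw)) z hz

namespace IsLewyChart

lemma map_nhds_eq {H : ℝ} {u : ℝ × ℝ → ℝ} {U V : Set (ℝ × ℝ)} {s : ℝ × ℝ → ℝ × ℝ} {k : ℝ × ℝ}
    (hs : IsLewyChart H u U V s) (hV : IsOpen V) (hk : k ∈ V) : map s (𝓝 k) = 𝓝 (s k) := by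
  obtain ⟨e, he⟩ := hs.isInvertible_fderiv hk
  have hstrict := (hs.contDiffAt hV hk).hasStrictFDerivAt two_ne_zero
  rw [← he] at hstrict
  exact hstrict.map_nhds_eq_of_equiv

lemma norm_gaussMap_sub_le {H ε : ℝ} {u : ℝ × ℝ → ℝ} {U V D : Set (ℝ × ℝ)}
    {s : ℝ × ℝ → ℝ × ℝ} {N : EuclideanSpace ℝ (Fin 3)} (hs : IsLewyChart H u U V s)
    (hU : IsOpen U) (hV : IsOpen V) (hu : IsCMCSolution H U u) (hD : IsCompact D) (hDV : D ⊆ V)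
    (hN : ‖N‖ = 1) (hε₀ : 0 ≤ ε) (hε : ε ≤ 1 / 2)
    (hfrontier : ∀ k ∈ frontier D, ‖gaussMap u (s k) - N‖ ≤ ε) :
    ∀ k ∈ D, ‖gaussMap u (s k) - N‖ ≤ 3 * ε := by
  have himage : IsCompact (s '' D) :=
    hD.image_of_continuousOn (hs.contDiffOn.continuousOn.mono hDV)
  have hsub := frontier_image_subset himage.isClosed fun k hk => hs.map_nhds_eq hV (hDV hk)
  have hfrontier_image : ∀ z ∈ frontier (s '' D), ‖gaussMap u z - N‖ ≤ ε := fun z hz => by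
    obtain ⟨k, hk, rfl⟩ := hsub hz
    exact hfrontier k hk
  exact fun k hk => norm_gaussMap_sub_le_of_frontier hU hu himage
    (image_subset_iff.2 fun k hk => hs.mapsTo (hDV hk)) hN hε₀ hε
    hfrontier_image _ (mem_image_of_mem s hk)

end IsLewyChart

lemma exists_radius_norm_gaussMap_sub_le (H : ℝ) {ρ ε : ℝ} (hρ : 0 < ρ) (hε₀ : 0 < ε)
    (hε : ε ≤ 1 / 2) :
    ∃ δ > 0, δ ≤ ρ ∧ ∀ (u : ℝ × ℝ → ℝ) (U : Set (ℝ × ℝ)) (s : ℝ × ℝ → ℝ × ℝ), IsOpen U →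
      IsCMCSolution H U u → IsLewyChart H u U (Metric.ball 0 ρ) s →
      ∀ k ∈ Metric.ball 0 δ, ‖gaussMap u (s k) - gaussMap u (s 0)‖ ≤ 6 * ε := by
  obtain ⟨δ, hδ, hcircle⟩ := exists_radius_norm_sub_le_on_circle (μ := ε / 4) hρ (by positivity)
    (400 * H ^ 2) 100
  refine ⟨min (δ / 2) ρ, by positivity, min_le_right _ _, fun u U s hU hu hs k hk => ?_⟩
  have hV : IsOpen (Metric.ball (0 : ℝ × ℝ) ρ) := Metric.isOpen_ball
  obtain ⟨t, ⟨hδt, htρ⟩, ht⟩ := hcircle (fun k => gaussMap u (s k))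
    ((contDiffOn_gaussMap hU hu.1).comp (hs.contDiffOn.of_le one_le_two) hs.mapsTo)
    (fun k _ => norm_gaussMap u (s k)) (fun k _ => inv_pos.2 (Wgraph_pos u (s k)))
    fun k hk => hs.energyDensity_gaussMap_comp_le_sub hU hV hu hk
  have hD : {k | enorm2 k ≤ t} ⊆ Metric.ball 0 ρ := fun k hk =>
    mem_ball_zero_iff.2 (((norm_le_enorm2 k).trans hk).trans_lt (htρ.trans_lt (half_lt_self hρ)))
  have hclose := hs.norm_gaussMap_sub_le hU hV hu (isCompact_enorm2_le t) hD
    (norm_gaussMap u (s (-t, 0))) hε₀.le hε fun k hk =>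
      (ht k (sq_add_sq_of_mem_frontier_enorm2_le hk)).trans_eq (by ring)
  have hball : ∀ k ∈ Metric.ball 0 (δ / 2), enorm2 k ≤ t := fun k hk =>
    (enorm2_le_two_mul_norm k).trans (by linarith [mem_ball_zero_iff.1 hk])
  calc ‖gaussMap u (s k) - gaussMap u (s 0)‖
      ≤ ‖gaussMap u (s k) - gaussMap u (s (-t, 0))‖ +
        ‖gaussMap u (s 0) - gaussMap u (s (-t, 0))‖ := by
        rw [norm_sub_rev (gaussMap u (s 0))]
        exact norm_sub_le_norm_sub_add_norm_sub _ _ _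
    _ ≤ 3 * ε + 3 * ε := add_le_add
        (hclose k (hball k (Metric.ball_subset_ball (min_le_left _ _) hk)))
        (hclose 0 (hball 0 (Metric.mem_ball_self (half_pos hδ))))
    _ = 6 * ε := by ring

lemma Wgraph_le_two_mul_of_norm_gaussMap_sub_le {M : ℝ} {u : ℝ × ℝ → ℝ} {z w : ℝ × ℝ}
    (hz : Wgraph u z ≤ M) (hw : ‖gaussMap u w - gaussMap u z‖ ≤ (2 * M)⁻¹) :
    Wgraph u w ≤ 2 * M := by
  have hM : 0 < M := (Wgraph_pos u z).trans_le hz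
  have hthird : |(Wgraph u w)⁻¹ - (Wgraph u z)⁻¹| ≤ (2 * M)⁻¹ :=
    (PiLp.norm_apply_le (gaussMap u w - gaussMap u z) 2).trans hw
  have hinv : M⁻¹ ≤ (Wgraph u z)⁻¹ := inv_anti₀ (Wgraph_pos u z) hz
  have hhalf : M⁻¹ = (2 * M)⁻¹ + (2 * M)⁻¹ := by
    field_simp
    norm_num
  exact (inv_le_inv₀ (by positivity) (Wgraph_pos u w)).1 (by linarith [(abs_le.1 hthird).1])

lemma exists_radius_Wgraph_comp_le (H : ℝ) {ρ M : ℝ} (hρ : 0 < ρ) (hM : 1 ≤ M) :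
    ∃ δ > 0, δ ≤ ρ ∧ ∀ (u : ℝ × ℝ → ℝ) (U : Set (ℝ × ℝ)) (s : ℝ × ℝ → ℝ × ℝ), IsOpen U →
      IsCMCSolution H U u → IsLewyChart H u U (Metric.ball 0 ρ) s → Wgraph u (s 0) ≤ M →
      ∀ k ∈ Metric.ball 0 δ, Wgraph u (s k) ≤ 2 * M := by
  have hε : 6 * (12 * M)⁻¹ = (2 * M)⁻¹ := by field_simp; norm_num
  have hinv : (12 * M)⁻¹ ≤ 1 / 2 := by
    rw [one_div]
    exact inv_anti₀ two_pos (by linarith)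
  obtain ⟨δ, hδ, hδρ, hclose⟩ := exists_radius_norm_gaussMap_sub_le H hρ
    (inv_pos.2 (by linarith : 0 < 12 * M)) hinv
  exact ⟨δ, hδ, hδρ, fun u U s hU hu hs hW k hk =>
    Wgraph_le_two_mul_of_norm_gaussMap_sub_le hW ((hclose u U s hU hu hs k hk).trans_eq hε)⟩

lemma exists_radius_Wgraph_le (H : ℝ) {r M : ℝ} (hr : 0 < r) (hM : 1 ≤ M) :
    ∃ R > 0, ∀ u, IsCMCSolution H (Metric.ball 0 r) u → u 0 = 0 → Wgraph u 0 ≤ M →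
      ∀ z ∈ Metric.ball 0 R, Wgraph u z ≤ 2 * M := by
  obtain ⟨ρ, hρ, hchart⟩ := exists_isLewyChart H hr
  obtain ⟨δ, hδ, hδρ, hle⟩ := exists_radius_Wgraph_comp_le H hρ hM
  set C := 5 / 2 + 2 * (2 * M)
  have hC : 0 < C := by positivity
  refine ⟨δ / (2 * C), by positivity, fun u hu hu0 hW z hz => ?_⟩
  obtain ⟨s, hs, hs0⟩ := hchart u hu hu0
  have hWs := hle u _ s Metric.isOpen_ball hu hs (by rwa [hs0])
  have hball : Metric.ball (0 : ℝ × ℝ) δ ⊆ Metric.ball 0 ρ := Metric.ball_subset_ball hδρ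
  have hcover : Metric.closedBall 0 (δ / (2 * C)) ⊆ s '' Metric.ball 0 δ :=
    closedBall_subset_image_ball hC.le (by positivity) (by field_simp; norm_num) hs0
      (hs.contDiffOn.mono hball) (fun k hk => hs.isInvertible_fderiv (hball hk)) fun k hk v => by
        refine (hs.norm_le_mul_norm_fderiv (hball hk) v).trans ?_
        gcongr
        simp only [C]
        linarith [hWs k hk]
  obtain ⟨k, hk, rfl⟩ := hcover (Metric.ball_subset_closedBall hz)
  exact hWs k hk

end CMC

theorem stmt_2_general (H r₀ M : ℝ) (hr₀ : 0 < r₀) (hM : 1 ≤ M) :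
    ∃ R > 0, ∀ (Ω : Set (ℝ × ℝ)) (u : ℝ × ℝ → ℝ), IsCMCSolution H Ω u → ∀ P : ℝ × ℝ,
      {q : ℝ × ℝ | enorm2 (q - P) ≤ r₀} ⊆ Ω → Wgraph u P ≤ M →
      ∀ Q : ℝ × ℝ, enorm2 (Q - P) < R → Wgraph u Q ≤ 2 * M := by
  obtain ⟨R, hR, hle⟩ := CMC.exists_radius_Wgraph_le H (half_pos hr₀) hM
  refine ⟨R, hR, fun Ω u hu P hPΩ hP Q hQ => ?_⟩
  have htranslate := CMC.isCMCSolution_comp_add_add_const hu P (-u P)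
  have hball : Metric.ball 0 (r₀ / 2) ⊆ (· + P) ⁻¹' Ω := fun z hz => hPΩ <| by
    rw [mem_ofPred_eq, add_sub_cancel_right]
    linarith [CMC.enorm2_le_two_mul_norm z, mem_ball_zero_iff.1 hz]
  have hW := hle _ ⟨htranslate.1.mono hball, fun z hz => htranslate.2 z (hball hz)⟩ (by simp)
    (by rwa [CMC.Wgraph_comp_add_add_const, zero_add]) (Q - P)
    (mem_ball_zero_iff.2 ((CMC.norm_le_enorm2 _).trans_lt hQ))
  rwa [CMC.Wgraph_comp_add_add_const, sub_add_cancel] at hW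

/-- interior gradient estimate — there is `R = R(H, M, r₀) > 0` such that
`W_u ≤ M` at a point `P` at distance `≥ r₀` from the boundary implies `W_u ≤ 2M` on the
disk of radius `R` around `P`. -/
theorem stmt_2 (H r₀ M : ℝ) (hH : 0 < H) (hr₀ : 0 < r₀) (hM : 1 ≤ M) :
    ∃ R > 0, ∀ (Ω : Set (ℝ × ℝ)), IsOpen Ω → ∀ u : ℝ × ℝ → ℝ,
      IsCMCSolution H Ω u → ∀ P : ℝ × ℝ,
      {q : ℝ × ℝ | enorm2 (q - P) ≤ r₀} ⊆ Ω → Wgraph u P ≤ M →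
      ∀ Q : ℝ × ℝ, enorm2 (Q - P) < R → Wgraph u Q ≤ 2 * M := by
  obtain ⟨R, hR, hle⟩ := stmt_2_general H r₀ M hr₀ hM
  exact ⟨R, hR, fun Ω _ => hle Ω⟩
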